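/- Let n,m ≥ 1, 0<α<mn, and let T_α^m be a multilinear fractional operator with kernel K_α satisfying the size condition and the smoothness condition with exponent 0<γ≤1. Let 0<δ<min{γ, mn−α}, set α̃=α+δ, and let p⃗=(p_1,…,p_m) be a vector of exponents with p>n/α̃. Let b=(b_1,…,b_m) with b_i ∈ Λ(δ) for every i. Let δ̃ ≤ δ and let (w,v⃗) be a pair of weights in the class H_m(p⃗, α̃, δ̃) (for some fixed splitting α̃ = Σ α̃_i with 0<α̃_i<n), such that v_i^{−p_i'} ∈ RH_m for every i with 1<p_i≤∞. Then there is a constant C>0 such that for every ball B and every f⃗=(f_1,…,f_m) with f_i v_i ∈ L^{p_i}(ℝ^n) for each i, one has (‖w χ_B‖_∞ / |B|^{1+δ̃/n}) ∫_B |T^m_{α,b} f⃗(x) − (T^m_{α,b} f⃗)_B| dx ≤ C ∏_{i=1}^m ‖f_i v_i‖_{L^{p_i}}. -/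

import Mathlib

/-!
The `j`-th term of the commutator is an integral operator with kernel
`F x y = (b_j x - b_j (y_j)) K x y ∏ f_i (y_i)`. Fix a ball `B = B(c,R)` and split `(ℝⁿ)^m` into
`(5B)^m` and its complement.

On the complement, smoothness of `K` and the Lipschitz condition give
`|F x y - F z y| ≲ R^δ ∏ |f_i (y_i)| (|B|^{1/n} + |c - y_i|)^{-(n - β_i + δ/m)}` for `x, z ∈ B`
(`smooth_bound`), and Hölder's inequality in each variable reproduces the factors of the class `H_m`
(`global_int`).

On `(5B)^m`, only size is available: the commutator kernel is `≲ (∑ |x - y_i|)^{α + δ - mn}`. With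
`t_i = 1 - 1/p_i` and `lam = (mn - α - δ) / ∑ t_i`, this is at most `∏ |x - y_i|^{-lam t_i}`
(`size_bound`), and `p > n / (α + δ)` says precisely that `lam < n`. Hölder's inequality in each
`y_i`, followed by Hölder's inequality in `x` with exponents `m / t_i`, leaves the `L^m(B)` norms of
the Riesz potentials of `v_i^{-p_i'} χ_{5B}` (`local_int`). These are bounded by `L^m(5B)` norms of
`v_i^{-p_i'}` through the Schur test (`kernel_Ls`), and the reverse Hölder condition `RH_m` turns
them into `L¹(5B)` norms (`riesz_RH`), which are again dominated by the `H_m` factors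
(`local_factor`).

Both parts combine to `∫_B |T f - a| ≲ R^{n + δ} ∏ ‖f_i v_i‖ ∏ (H_m factors)` for some constant `a`
(`osc_const`, `comm_osc`); passing from `a` to the average costs a factor two (`osc_avg`), and the
`H_m` condition concludes. The defining integral of the commutator need not converge: unless the
bound is infinite, it diverges at every point of `B` or at almost none, and in the former case the
Bochner integral is zero on `B` and `a = 0` serves.
-/

open MeasureTheory Metric Set
open scoped ENNReal NNReal BigOperators
open scoped Classical

noncomputable section

/-- Euclidean space `ℝⁿ`. -/
abbrev Rn (n : ℕ) : Type := EuclideanSpace ℝ (Fin n)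

/-- The `q`-"norm" of a nonnegative function with respect to the measure `μ`,
for `q ∈ [1,∞]`; `q = ∞` gives the essential supremum. -/
noncomputable def LpNormE {α : Type*} [MeasurableSpace α] (μ : Measure α)
    (g : α → ℝ≥0∞) (q : ℝ≥0∞) : ℝ≥0∞ :=
  if q = ∞ then essSup g μ else (∫⁻ x, g x ^ q.toReal ∂μ) ^ (1 / q.toReal)

/-- Conjugate exponent in `[1,∞]`. -/
noncomputable def conjE (q : ℝ≥0∞) : ℝ≥0∞ :=
  if q = 1 then ∞ else if q = ∞ then 1 else ENNReal.ofReal (q.toReal / (q.toReal - 1))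

/-- Real-valued conjugate exponent of `q ∈ (1,∞]`. -/
noncomputable def conjR (q : ℝ≥0∞) : ℝ :=
  if q = ∞ then 1 else q.toReal / (q.toReal - 1)

/-- A weight: measurable, a.e. positive and finite, and locally integrable. -/
def IsWeight (n : ℕ) (u : Rn n → ℝ≥0∞) : Prop :=
  Measurable u ∧ (∀ᵐ x ∂(volume : Measure (Rn n)), 0 < u x ∧ u x < ∞) ∧
    ∀ (c : Rn n) (R : ℝ), 0 < R → ∫⁻ x in ball c R, u x < ∞

/-- The `i`-th factor in the `H_m(p,β,δ̃)` condition over the ball `B(c,R)`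
(`δ` is the fixed ambient parameter, `β i` the splitting of `β`). For `p i = 1`
the conjugate exponent is `∞` and the factor is an essential supremum. -/
noncomputable def HmFactor (n m : ℕ) (δ : ℝ) (β : Fin m → ℝ) (p : Fin m → ℝ≥0∞)
    (v : Fin m → Rn n → ℝ≥0∞) (c : Rn n) (R : ℝ) (i : Fin m) : ℝ≥0∞ :=
  LpNormE volume
    (fun y => (v i y)⁻¹ *
      (volume (ball c R) ^ (n : ℝ)⁻¹ + edist c y) ^ (-((n : ℝ) - β i + δ / (m : ℝ))))
    (conjE (p i))

/-- The left-hand side of the `H_m(p,β,δ̃)` condition over the ball `B(c,R)`. -/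
noncomputable def HmLHS (n m : ℕ) (δ δt : ℝ) (β : Fin m → ℝ) (p : Fin m → ℝ≥0∞)
    (w : Rn n → ℝ≥0∞) (v : Fin m → Rn n → ℝ≥0∞) (c : Rn n) (R : ℝ) : ℝ≥0∞ :=
  essSup w (volume.restrict (ball c R)) / volume (ball c R) ^ ((δt - δ) / (n : ℝ)) *
    ∏ i, HmFactor n m δ β p v c R i

/-- The class `H_m(p,β,δ̃)`, with fixed ambient parameter `δ` and splitting `β i`. -/
def MemHm (n m : ℕ) (δ δt : ℝ) (β : Fin m → ℝ) (p : Fin m → ℝ≥0∞)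
    (w : Rn n → ℝ≥0∞) (v : Fin m → Rn n → ℝ≥0∞) : Prop :=
  ∃ C : ℝ≥0∞, C ≠ ∞ ∧ ∀ (c : Rn n) (R : ℝ), 0 < R → HmLHS n m δ δt β p w v c R ≤ C

/-- The reverse Hölder class `RH_s`. -/
def MemRH (n : ℕ) (s : ℝ) (u : Rn n → ℝ≥0∞) : Prop :=
  ∃ C : ℝ≥0∞, C ≠ ∞ ∧ ∀ (c : Rn n) (R : ℝ), 0 < R →
    ((volume (ball c R))⁻¹ * ∫⁻ x in ball c R, u x ^ s) ^ s⁻¹ ≤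
      C * ((volume (ball c R))⁻¹ * ∫⁻ x in ball c R, u x)

/-- The reverse Hölder class `RH_∞`. -/
def MemRHinf (n : ℕ) (u : Rn n → ℝ≥0∞) : Prop :=
  ∃ C : ℝ≥0∞, C ≠ ∞ ∧ ∀ (c : Rn n) (R : ℝ), 0 < R →
    essSup u (volume.restrict (ball c R)) ≤
      C * ((volume (ball c R))⁻¹ * ∫⁻ x in ball c R, u x)

/-- The Muckenhoupt class `A_1`. -/
def MemA1 (n : ℕ) (u : Rn n → ℝ≥0∞) : Prop :=
  ∃ C : ℝ≥0∞, C ≠ ∞ ∧ ∀ (c : Rn n) (R : ℝ), 0 < R →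
    (volume (ball c R))⁻¹ * ∫⁻ x in ball c R, u x ≤
      C * essInf u (volume.restrict (ball c R))

/-- A doubling function: the integral over `2B` is controlled by the one over `B`. -/
def Doubling (n : ℕ) (u : Rn n → ℝ≥0∞) : Prop :=
  ∃ C : ℝ≥0∞, C ≠ ∞ ∧ ∀ (c : Rn n) (R : ℝ), 0 < R →
    ∫⁻ x in ball c (2 * R), u x ≤ C * ∫⁻ x in ball c R, u x

/-- The `i`-th factor in the global condition over the ball `B(c,R)`. -/
noncomputable def GlobalFactor (n m : ℕ) (δ : ℝ) (β : Fin m → ℝ) (p : Fin m → ℝ≥0∞)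
    (v : Fin m → Rn n → ℝ≥0∞) (c : Rn n) (R : ℝ) (i : Fin m) : ℝ≥0∞ :=
  LpNormE (volume.restrict (ball c R)ᶜ)
    (fun y => (v i y)⁻¹ * edist c y ^ (-((n : ℝ) - β i + δ / (m : ℝ)))) (conjE (p i))

/-- The global condition associated with the class `H_m(p,β,δ̃)`. -/
def GlobalCond (n m : ℕ) (δ δt : ℝ) (β : Fin m → ℝ) (p : Fin m → ℝ≥0∞)
    (w : Rn n → ℝ≥0∞) (v : Fin m → Rn n → ℝ≥0∞) : Prop :=
  ∃ C : ℝ≥0∞, C ≠ ∞ ∧ ∀ (c : Rn n) (R : ℝ), 0 < R →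
    essSup w (volume.restrict (ball c R)) / volume (ball c R) ^ ((δt - δ) / (n : ℝ)) *
      ∏ i, GlobalFactor n m δ β p v c R i ≤ C

/-- The local condition associated with the class `H_m(p,β,δ̃)`; here `β` is the
total (scalar) parameter. -/
def LocalCond (n m : ℕ) (δt β : ℝ) (p : Fin m → ℝ≥0∞)
    (w : Rn n → ℝ≥0∞) (v : Fin m → Rn n → ℝ≥0∞) : Prop :=
  ∃ C : ℝ≥0∞, C ≠ ∞ ∧ ∀ (c : Rn n) (R : ℝ), 0 < R →
    essSup w (volume.restrict (ball c R)) /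
        volume (ball c R) ^ (δt / (n : ℝ) + (∑ i, (p i)⁻¹).toReal - β / (n : ℝ)) *
      ∏ i, (if p i = 1 then essSup (fun x => (v i x)⁻¹) (volume.restrict (ball c R))
        else ((volume (ball c R))⁻¹ * ∫⁻ x in ball c R, (v i x)⁻¹ ^ conjR (p i)) ^
          (conjR (p i))⁻¹) ≤ C

/-- The multilinear class `A_{p⃗,∞}`. -/
def MemApInf (n m : ℕ) (p : Fin m → ℝ≥0∞) (v : Fin m → Rn n → ℝ≥0∞) : Prop :=
  ∃ C : ℝ≥0∞, C ≠ ∞ ∧ ∀ (c : Rn n) (R : ℝ), 0 < R →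
    essSup (fun x => ∏ i, v i x) (volume.restrict (ball c R)) *
      ∏ i, (if p i = 1 then essSup (fun x => (v i x)⁻¹) (volume.restrict (ball c R))
        else ((volume (ball c R))⁻¹ * ∫⁻ x in ball c R, (v i x)⁻¹ ^ conjR (p i)) ^
          (conjR (p i))⁻¹) ≤ C

/-- The multilinear class `A_{p⃗,q}` for `0 < q < ∞`. -/
def MemApq (n m : ℕ) (p : Fin m → ℝ≥0∞) (q : ℝ) (w : Fin m → Rn n → ℝ≥0∞) : Prop :=
  ∃ C : ℝ≥0∞, C ≠ ∞ ∧ ∀ (c : Rn n) (R : ℝ), 0 < R →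
    ((volume (ball c R))⁻¹ * ∫⁻ x in ball c R, ∏ i, w i x ^ q) ^ (1 / q) *
      ∏ i, (if p i = 1 then essSup (fun x => (w i x)⁻¹) (volume.restrict (ball c R))
        else ((volume (ball c R))⁻¹ * ∫⁻ x in ball c R, (w i x)⁻¹ ^ conjR (p i)) ^
          (conjR (p i))⁻¹) ≤ C

/-- The multilinear Muckenhoupt class `A_{r⃗}`. -/
def MemAvec (n m : ℕ) (r : Fin m → ℝ≥0∞) (u : Fin m → Rn n → ℝ≥0∞) : Prop :=
  ∃ C : ℝ≥0∞, C ≠ ∞ ∧ ∀ (c : Rn n) (R : ℝ), 0 < R →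
    ((volume (ball c R))⁻¹ *
        ∫⁻ x in ball c R, ∏ i, u i x ^ ((∑ j, (r j)⁻¹).toReal⁻¹ * ((r i)⁻¹).toReal)) ^
        (∑ j, (r j)⁻¹).toReal *
      ∏ i, (if r i = 1 then essSup (fun x => (u i x)⁻¹) (volume.restrict (ball c R))
        else ((volume (ball c R))⁻¹ * ∫⁻ x in ball c R, u i x ^ (1 - conjR (r i))) ^
          (conjR (r i))⁻¹) ≤ C

/-- Product Lebesgue measure on `(ℝⁿ)^m`. -/
noncomputable def pim (n m : ℕ) : Measure (Fin m → Rn n) :=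
  Measure.pi fun _ => (volume : Measure (Rn n))

/-- Size condition for a multilinear fractional kernel of order `α`. -/
def SizeCond (n m : ℕ) (α : ℝ) (K : Rn n → (Fin m → Rn n) → ℝ) : Prop :=
  ∃ C : ℝ, 0 < C ∧ ∀ (x : Rn n) (y : Fin m → Rn n), (∑ i, dist x (y i)) ≠ 0 →
    |K x y| ≤ C * (∑ i, dist x (y i)) ^ (α - (m : ℝ) * (n : ℝ))

/-- Smoothness condition with exponent `γ` for a multilinear fractional kernel. -/
def SmoothCond (n m : ℕ) (α γ : ℝ) (K : Rn n → (Fin m → Rn n) → ℝ) : Prop :=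
  ∃ C : ℝ, 0 < C ∧ ∀ (x x' : Rn n) (y : Fin m → Rn n),
    2 * dist x x' < ∑ i, dist x (y i) →
    |K x y - K x' y| ≤ C * dist x x' ^ γ * (∑ i, dist x (y i)) ^ (α - (m : ℝ) * (n : ℝ) - γ)

/-- The Lipschitz space `Λ(δ)`. -/
def MemLip (n : ℕ) (δ : ℝ) (b : Rn n → ℝ) : Prop :=
  ∃ C : ℝ, 0 ≤ C ∧ ∀ x y : Rn n, |b x - b y| ≤ C * dist x y ^ δ

/-- The multilinear integral operator with kernel `K`. -/
noncomputable def TOp (n m : ℕ) (K : Rn n → (Fin m → Rn n) → ℝ)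
    (f : Fin m → Rn n → ℝ) (x : Rn n) : ℝ :=
  ∫ y, K x y * ∏ i, f i (y i) ∂pim n m

/-- The sum-type multilinear commutator `T_{α,b}`. -/
noncomputable def TSumComm (n m : ℕ) (K : Rn n → (Fin m → Rn n) → ℝ)
    (b : Fin m → Rn n → ℝ) (f : Fin m → Rn n → ℝ) (x : Rn n) : ℝ :=
  ∑ j, ∫ y, (b j x - b j (y j)) * K x y * ∏ i, f i (y i) ∂pim n m

/-- The product-type multilinear commutator `𝒯_{α,b}` (integral representation). -/
noncomputable def TProdComm (n m : ℕ) (K : Rn n → (Fin m → Rn n) → ℝ)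
    (b : Fin m → Rn n → ℝ) (f : Fin m → Rn n → ℝ) (x : Rn n) : ℝ :=
  ∫ y, K x y * ∏ i, (b i x - b i (y i)) * f i (y i) ∂pim n m

/-- `‖f · v‖_q` for a real function `f` and a weight `v`. -/
noncomputable def wLpNorm (n : ℕ) (f : Rn n → ℝ) (v : Rn n → ℝ≥0∞) (q : ℝ≥0∞) : ℝ≥0∞ :=
  LpNormE volume (fun x => ENNReal.ofReal |f x| * v x) q

/-- The (nonnegative) multilinear fractional integral `I_{a,m}`. -/
noncomputable def IfracE (n m : ℕ) (a : ℝ) (g : Fin m → Rn n → ℝ≥0∞) (x : Rn n) : ℝ≥0∞ :=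
  ∫⁻ y, (∑ i, edist x (y i)) ^ (a - (m : ℝ) * (n : ℝ)) * ∏ i, g i (y i) ∂pim n m

/-- Commuting with `b` in the `j`-th entry. -/
noncomputable def commAt (n m : ℕ) (T : (Fin m → Rn n → ℝ) → Rn n → ℝ)
    (g : Rn n → ℝ) (j : Fin m) (f : Fin m → Rn n → ℝ) (x : Rn n) : ℝ :=
  g x * T f x - T (Function.update f j fun z => g z * f j z) x

/-- The iterated commutator `[b_k, … [b_2, [b_1, T]_1]_2 … ]_k`. -/
noncomputable def iterComm (n m : ℕ) (T : (Fin m → Rn n → ℝ) → Rn n → ℝ)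
    (b : Fin m → Rn n → ℝ) : ℕ → (Fin m → Rn n → ℝ) → Rn n → ℝ
  | 0 => T
  | k + 1 => fun f x =>
      if h : k < m then commAt n m (iterComm n m T b k) (b ⟨k, h⟩) ⟨k, h⟩ f x
      else iterComm n m T b k f x

end

/-! ### Integrals of product functions and of the Riesz kernel -/

theorem lintegral_pi_prod {E : Type*} [MeasurableSpace E] {k : ℕ} (μ : Fin k → Measure E)
    [∀ i, SigmaFinite (μ i)] (g : Fin k → E → ℝ≥0∞) (hg : ∀ i, Measurable (g i)) :
    ∫⁻ y, ∏ i, g i (y i) ∂Measure.pi μ = ∏ i, ∫⁻ z, g i z ∂μ i := by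
  induction k with
  | zero => simp
  | succ k ih =>
    have h0 := (measurePreserving_piFinSuccAbove μ 0).symm
    rw [← h0.lintegral_comp_emb (MeasurableEquiv.measurableEmbedding _)]
    simp_rw [MeasurableEquiv.piFinSuccAbove_symm_apply, Fin.insertNthEquiv,
      Fin.prod_univ_succ]
    simp only [Fin.zero_succAbove, Equiv.coe_fn_mk, Fin.insertNth_zero, Fin.cons_zero,
      Fin.cons_succ, cast_eq]
    rw [lintegral_prod_mul (f := fun z => g 0 z)
      (g := fun y : Fin k → E => ∏ i : Fin k, g i.succ (y i)) (hg 0).aemeasurable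
      (Finset.measurable_fun_prod _ fun i _ =>
        (hg i.succ).comp (measurable_pi_apply i)).aemeasurable]
    rw [ih (fun i => μ i.succ) (fun i => g i.succ) fun i => hg i.succ]

theorem finrank_Rn (n : ℕ) : Module.finrank ℝ (Rn n) = n := by simp

theorem edist_zero_enorm {n : ℕ} (y : Rn n) : edist 0 y = ‖y‖ₑ := by
  simp [edist_zero_left, enorm]

theorem riesz_unit_ball (n : ℕ) (hn : 1 ≤ n) {lam : ℝ} (hlam : lam < n) :
    ∫⁻ y in ball (0 : Rn n) 1, edist 0 y ^ (-lam) < ∞ := by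
  have : Nonempty (Fin n) := ⟨⟨0, hn⟩⟩
  have hint : IntegrableOn (fun x : Rn n => ‖x‖ ^ (-lam)) (ball 0 1) := by
    rw [integrableOn_fun_norm_addHaar volume (f := fun t : ℝ => t ^ (-lam))]
    have h1 : IntegrableOn (fun y : ℝ => y ^ ((n : ℝ) - 1 - lam)) (Ioo 0 1) := by
      rw [intervalIntegral.integrableOn_Ioo_rpow_iff zero_lt_one]
      linarith
    refine h1.congr_fun ?_ measurableSet_Ioo
    intro y hy
    simp only [finrank_Rn, smul_eq_mul]
    rw [← Real.rpow_natCast, ← Real.rpow_add hy.1]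
    congr 1
    push_cast [Nat.cast_sub hn]
    ring
  have h2 := hint.2
  rw [HasFiniteIntegral] at h2
  refine lt_of_le_of_lt (lintegral_mono_ae ?_) h2
  have h0 : ∀ᵐ y : Rn n ∂volume.restrict (ball 0 1), y ≠ 0 :=
    ae_restrict_of_ae (by simp [ae_iff])
  filter_upwards [h0] with y hy
  rw [edist_zero_enorm, Real.enorm_of_nonneg (Real.rpow_nonneg (norm_nonneg y) _),
    ← ENNReal.ofReal_rpow_of_pos (norm_pos_iff.2 hy), ofReal_norm]

/-- Local integrability of the Riesz kernel `|x-y|^{-lam}` for `lam < n`, with the scaling of the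
integral in the radius. -/
theorem riesz_ball (n : ℕ) (hn : 1 ≤ n) {lam : ℝ} (hlam : lam < n) :
    ∃ C : ℝ≥0∞, C ≠ ∞ ∧ ∀ (x : Rn n) (ρ : ℝ), 0 < ρ →
      ∫⁻ y in ball x ρ, edist x y ^ (-lam) ≤ C * ENNReal.ofReal ρ ^ ((n : ℝ) - lam) := by
  refine ⟨_, (riesz_unit_ball n hn hlam).ne, fun x ρ hρ => le_of_eq ?_⟩
  have hρ0 : ENNReal.ofReal ρ ≠ 0 := by simpa using hρ
  have hm : Measurable fun y : Rn n => edist 0 y ^ (-lam) := by fun_prop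
  have h1 : ∫⁻ y in ball x ρ, edist x y ^ (-lam)
      = ∫⁻ y in ball (0 : Rn n) ρ, edist 0 y ^ (-lam) := by
    rw [← lintegral_indicator measurableSet_ball, ← lintegral_indicator measurableSet_ball,
      ← lintegral_add_right_eq_self _ x]
    congr 1; ext y
    have e1 : dist (y + x) x = ‖y‖ := by simp [dist_eq_norm]
    have e2 : edist x (y + x) = ‖y‖ₑ := by rw [edist_comm]; simp [edist_eq_enorm_sub]
    simp only [indicator, mem_ball, dist_zero_right, edist_zero_enorm, e1, e2]
  rw [h1]
  -- substitute `y = ρ z`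
  have h2 := Measure.map_addHaar_smul (volume : Measure (Rn n)) hρ.ne'
  have h3 : ∫⁻ y in ball (0 : Rn n) ρ, edist 0 y ^ (-lam)
        ∂(Measure.map (ρ • ·) (volume : Measure (Rn n)))
      = ∫⁻ y in ball (0 : Rn n) 1, ENNReal.ofReal ρ ^ (-lam) * edist 0 y ^ (-lam) := by
    rw [← lintegral_indicator measurableSet_ball, ← lintegral_indicator measurableSet_ball,
      lintegral_map (hm.indicator measurableSet_ball) (by fun_prop)]
    congr 1; ext y
    have : ρ * ‖y‖ < ρ ↔ ‖y‖ < 1 := by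
      constructor
      · intro h; nlinarith
      · intro h; nlinarith
    simp only [indicator, mem_ball, dist_zero_right, edist_zero_enorm, norm_smul,
      Real.norm_eq_abs, abs_of_pos hρ, this]
    split_ifs
    · rw [enorm_smul, Real.enorm_of_nonneg hρ.le,
        ENNReal.mul_rpow_of_ne_top (by simp) (by simp)]
    · rfl
  rw [h2, lintegral_const_mul _ hm, Measure.restrict_smul, lintegral_smul_measure,
    finrank_Rn, abs_of_pos (by positivity), ENNReal.ofReal_inv_of_pos (by positivity),
    ENNReal.ofReal_pow hρ.le, smul_eq_mul] at h3
  have h4 : ENNReal.ofReal ρ ^ n ≠ 0 := pow_ne_zero _ hρ0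
  have h5 : ENNReal.ofReal ρ ^ n ≠ ∞ := by simp
  have h6 := congrArg (fun t => ENNReal.ofReal ρ ^ n * t) h3
  simp only [← mul_assoc, ENNReal.mul_inv_cancel h4 h5, one_mul] at h6
  rw [h6, mul_comm]
  congr 1
  rw [ENNReal.rpow_sub _ _ hρ0 (by simp), ENNReal.rpow_neg, ENNReal.rpow_natCast, div_eq_mul_inv]

/-! ### Mean oscillation of parametric integrals -/

/-- The mean oscillation about the average is at most twice the mean deviation from any
constant `a`. -/
theorem osc_avg {X : Type*} [MeasurableSpace X] (μ : Measure X) [IsFiniteMeasure μ]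
    (hμ : μ univ ≠ 0) {g : X → ℝ} (hg : AEStronglyMeasurable g μ) (a : ℝ) {M : ℝ≥0∞}
    (h : ∫⁻ x, ENNReal.ofReal |g x - a| ∂μ ≤ M) :
    ∫⁻ x, ENNReal.ofReal |g x - (μ univ).toReal⁻¹ * ∫ z, g z ∂μ| ∂μ ≤ 2 * M := by
  by_cases hM : M = ∞
  · simp [hM]
  have hga : Integrable (fun x => g x - a) μ := by
    refine ⟨hg.sub aestronglyMeasurable_const, ?_⟩
    rw [HasFiniteIntegral]
    simp only [← ofReal_norm, Real.norm_eq_abs]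
    exact lt_of_le_of_lt h (lt_top_iff_ne_top.2 hM)
  have hgi : Integrable g μ := by
    have := hga.add (integrable_const a)
    refine this.congr (Filter.Eventually.of_forall fun x => ?_)
    simp
  have hpos : 0 < (μ univ).toReal := ENNReal.toReal_pos hμ (measure_ne_top _ _)
  set G := (μ univ).toReal⁻¹ * ∫ z, g z ∂μ with hG
  have hGa : G - a = (μ univ).toReal⁻¹ * ∫ z, (g z - a) ∂μ := by
    rw [integral_sub hgi (integrable_const a), integral_const, smul_eq_mul, mul_sub, ← hG]
    simp only [Measure.real]
    field_simp
  have h1 : μ univ * ENNReal.ofReal |G - a| ≤ M := by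
    have e1 : |∫ z, (g z - a) ∂μ| ≤ ∫ z, |g z - a| ∂μ := by
      simpa [Real.norm_eq_abs] using norm_integral_le_integral_norm (fun z => g z - a) (μ := μ)
    have e2 : ENNReal.ofReal (∫ z, |g z - a| ∂μ) ≤ M := by
      rw [ofReal_integral_eq_lintegral_ofReal hga.abs
        (Filter.Eventually.of_forall fun _ => abs_nonneg _)]
      exact h
    rw [hGa, abs_mul, abs_of_pos (inv_pos.2 hpos), ENNReal.ofReal_mul (inv_nonneg.2 hpos.le),
      ENNReal.ofReal_inv_of_pos hpos, ENNReal.ofReal_toReal (measure_ne_top _ _), ← mul_assoc,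
      ENNReal.mul_inv_cancel hμ (measure_ne_top _ _), one_mul]
    exact (ENNReal.ofReal_le_ofReal e1).trans e2
  calc ∫⁻ x, ENNReal.ofReal |g x - G| ∂μ
      ≤ ∫⁻ x, (ENNReal.ofReal |g x - a| + ENNReal.ofReal |G - a|) ∂μ := by
        refine lintegral_mono fun x => ?_
        rw [← ENNReal.ofReal_add (abs_nonneg _) (abs_nonneg _)]
        refine ENNReal.ofReal_le_ofReal ?_
        rw [abs_sub_comm G a]
        exact abs_sub_le _ _ _
    _ ≤ M + M := by
        rw [lintegral_add_right _ measurable_const, lintegral_const, mul_comm]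
        exact add_le_add h h1
    _ = 2 * M := (two_mul M).symm

/-- Local/global splitting for `x ↦ ∫ F x y dy` on a set `B`: the part over `D` is controlled in
`L¹(B)` and the part over `Dᶜ` has controlled increments. The integral over `Dᶜ` need not converge:
since the increments are integrable, it then diverges for every `x ∈ B`, the Bochner integral
vanishes identically on `B`, and the constant `a = 0` works. -/
theorem osc_const {X Y : Type*} [MeasurableSpace X] [MeasurableSpace Y] (μ : Measure X)
    (ν : Measure Y) [SFinite ν] {F : X → Y → ℝ} (hF : Measurable fun q : X × Y => F q.1 q.2)
    {B : Set X} (hB : MeasurableSet B) (hμB : μ B ≠ 0) {D : Set Y} (hD : MeasurableSet D)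
    {A Q : ℝ≥0∞} (h1 : ∫⁻ x in B, ∫⁻ y in D, ENNReal.ofReal |F x y| ∂ν ∂μ ≤ A)
    (h2 : ∀ x ∈ B, ∀ z ∈ B, ∫⁻ y in Dᶜ, ENNReal.ofReal |F x y - F z y| ∂ν ≤ Q) :
    ∃ a : ℝ, ∫⁻ x in B, ENNReal.ofReal |(∫ y, F x y ∂ν) - a| ∂μ ≤ A + μ B * Q := by
  by_cases hA : A = ∞
  · exact ⟨0, by simp [hA]⟩
  by_cases hQ : Q = ∞
  · exact ⟨0, by simp [hQ, ENNReal.mul_top hμB]⟩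
  obtain ⟨z, hz⟩ : B.Nonempty := nonempty_iff_ne_empty.2 fun h => hμB (by simp [h])
  have hFx : ∀ x, Measurable (F x) := fun x => hF.comp measurable_prodMk_left
  have hdiff : ∀ x ∈ B, IntegrableOn (fun y => F x y - F z y) Dᶜ ν := by
    intro x hx
    refine ⟨((hFx x).sub (hFx z)).aestronglyMeasurable, ?_⟩
    rw [HasFiniteIntegral]
    simp only [← ofReal_norm, Real.norm_eq_abs]
    exact lt_of_le_of_lt (h2 x hx z hz) (lt_top_iff_ne_top.2 hQ)
  by_cases hzi : IntegrableOn (F z) Dᶜ ν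
  · refine ⟨∫ y in Dᶜ, F z y ∂ν, ?_⟩
    have hmeas : Measurable fun x => ∫⁻ y in D, ENNReal.ofReal |F x y| ∂ν := by
      refine Measurable.lintegral_prod_right' (f := fun q : X × Y => ENNReal.ofReal |F q.1 q.2|) ?_
      exact hF.abs.ennreal_ofReal
    have hfin : ∀ᵐ x ∂μ.restrict B, ∫⁻ y in D, ENNReal.ofReal |F x y| ∂ν < ∞ :=
      ae_lt_top hmeas (lt_of_le_of_lt h1 (lt_top_iff_ne_top.2 hA)).ne
    calc ∫⁻ x in B, ENNReal.ofReal |(∫ y, F x y ∂ν) - ∫ y in Dᶜ, F z y ∂ν| ∂μ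
        ≤ ∫⁻ x in B, ((∫⁻ y in D, ENNReal.ofReal |F x y| ∂ν) + Q) ∂μ := by
          refine lintegral_mono_ae ?_
          filter_upwards [hfin, ae_restrict_mem hB] with x hx hxB
          have i1 : IntegrableOn (F x) D ν := by
            refine ⟨(hFx x).aestronglyMeasurable, ?_⟩
            rw [HasFiniteIntegral]
            simpa only [← ofReal_norm, Real.norm_eq_abs] using hx
          have i2 : IntegrableOn (F x) Dᶜ ν := by
            refine ((hdiff x hxB).add hzi).congr (Filter.Eventually.of_forall fun y => ?_)
            simp
          have i3 : Integrable (F x) ν := by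
            rw [← integrableOn_univ, ← union_compl_self D]
            exact i1.union i2
          rw [← integral_add_compl hD i3, add_sub_assoc, ← integral_sub i2 hzi]
          refine (ENNReal.ofReal_le_ofReal (abs_add_le _ _)).trans ?_
          rw [ENNReal.ofReal_add (abs_nonneg _) (abs_nonneg _)]
          refine add_le_add ?_ ((?_ : _ ≤ _).trans (h2 x hxB z hz))
          · simpa only [Real.enorm_eq_ofReal_abs] using
              enorm_integral_le_lintegral_enorm (μ := ν.restrict D) (F x)
          · simpa only [Real.enorm_eq_ofReal_abs] using
              enorm_integral_le_lintegral_enorm (μ := ν.restrict Dᶜ) (fun y => F x y - F z y)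
      _ ≤ A + μ B * Q := by
          rw [lintegral_add_right _ measurable_const, lintegral_const,
            Measure.restrict_apply_univ, mul_comm Q]
          gcongr
  · refine ⟨0, ?_⟩
    have : ∀ x ∈ B, ∫ y, F x y ∂ν = 0 := by
      intro x hx
      refine integral_undef fun hi => hzi ?_
      refine (hi.integrableOn.sub (hdiff x hx)).congr (Filter.Eventually.of_forall fun y => ?_)
      simp
    rw [setLIntegral_congr_fun hB (g := fun _ => 0) fun x hx => by simp [this x hx]]
    simp

/-! ### Conjugate exponents and Hölder's inequality -/

/-- The reciprocal `1/p'` of the conjugate exponent of `p ∈ [1,∞]`; it vanishes for `p = 1`. -/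
noncomputable def tp (p : ℝ≥0∞) : ℝ := 1 - (p⁻¹).toReal

theorem tp_one : tp 1 = 0 := by simp [tp]

theorem conjE_one : conjE 1 = ∞ := by simp [conjE]

theorem toReal_gt_one {p : ℝ≥0∞} (hp : 1 < p) (hp' : p ≠ ∞) : 1 < p.toReal := by
  have := (ENNReal.toReal_lt_toReal (by simp) hp').2 hp
  simpa using this

theorem one_le_conjR {p : ℝ≥0∞} (hp : 1 < p) : 1 ≤ conjR p := by
  unfold conjR
  split_ifs with h
  · exact le_rfl
  · have := toReal_gt_one hp h
    rw [le_div_iff₀ (by linarith)]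
    linarith

theorem conjE_ne_top {p : ℝ≥0∞} (hp : 1 < p) : conjE p ≠ ∞ := by
  unfold conjE
  split_ifs <;> simp_all

theorem conjE_toReal {p : ℝ≥0∞} (hp : 1 < p) : (conjE p).toReal = conjR p := by
  have h := one_le_conjR hp
  by_cases h1 : p = ∞
  · simp [conjE, conjR, h1]
  · have h2 : conjR p = p.toReal / (p.toReal - 1) := by simp [conjR, h1]
    simp only [conjE, hp.ne', h1, if_false]
    rw [← h2, ENNReal.toReal_ofReal (by linarith)]

theorem conjE_ne_zero {p : ℝ≥0∞} (hp : 1 ≤ p) : conjE p ≠ 0 := by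
  rcases hp.eq_or_lt with rfl | hp
  · simp [conjE_one]
  · intro h
    have h1 := conjE_toReal hp
    have h2 := one_le_conjR hp
    rw [h] at h1
    simp at h1
    linarith

theorem tp_eq {p : ℝ≥0∞} (hp : 1 < p) : tp p = (conjR p)⁻¹ := by
  unfold tp conjR
  split_ifs with h
  · simp [h]
  · have := toReal_gt_one hp h
    rw [ENNReal.toReal_inv]
    field_simp

theorem tp_nonneg {p : ℝ≥0∞} (hp : 1 ≤ p) : 0 ≤ tp p := by
  rcases hp.eq_or_lt with rfl | hp
  · simp [tp_one]
  · rw [tp_eq hp]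
    exact inv_nonneg.2 (by linarith [one_le_conjR hp])

theorem tp_le_one (p : ℝ≥0∞) : tp p ≤ 1 := by
  unfold tp
  linarith [ENNReal.toReal_nonneg (a := p⁻¹)]

section LpNormE
variable {X : Type*} [MeasurableSpace X] {μ : Measure X}

theorem LpNormE_mono_ae {f g : X → ℝ≥0∞} (q : ℝ≥0∞) (h : ∀ᵐ x ∂μ, f x ≤ g x) :
    LpNormE μ f q ≤ LpNormE μ g q := by
  unfold LpNormE
  split_ifs
  · exact essSup_mono_ae h
  · refine ENNReal.rpow_le_rpow (lintegral_mono_ae ?_) (by positivity)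
    filter_upwards [h] with x hx
    exact ENNReal.rpow_le_rpow hx ENNReal.toReal_nonneg

theorem LpNormE_mono_measure {ν : Measure X} (f : X → ℝ≥0∞) (q : ℝ≥0∞) (h : μ ≤ ν) :
    LpNormE μ f q ≤ LpNormE ν f q := by
  unfold LpNormE
  split_ifs
  · exact essSup_mono_measure' h
  · exact ENNReal.rpow_le_rpow (lintegral_mono' h le_rfl) (by positivity)

theorem LpNormE_const_mul {c : ℝ≥0∞} (hc : c ≠ ∞) (f : X → ℝ≥0∞) {q : ℝ≥0∞} (hq : q ≠ 0) :
    LpNormE μ (fun x => c * f x) q = c * LpNormE μ f q := by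
  unfold LpNormE
  split_ifs with h
  · exact ENNReal.essSup_const_mul
  · have hq' : 0 < q.toReal := ENNReal.toReal_pos hq h
    simp_rw [ENNReal.mul_rpow_of_nonneg _ _ hq'.le]
    rw [lintegral_const_mul' _ _ (ENNReal.rpow_ne_top_of_nonneg hq'.le hc),
      ENNReal.mul_rpow_of_nonneg _ _ (by positivity), ← ENNReal.rpow_mul,
      mul_one_div_cancel hq'.ne', ENNReal.rpow_one]

theorem holder_LpNormE {p : ℝ≥0∞} (hp : 1 ≤ p) {f g : X → ℝ≥0∞} (hf : AEMeasurable f μ)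
    (hg : AEMeasurable g μ) :
    ∫⁻ x, f x * g x ∂μ ≤ LpNormE μ f p * LpNormE μ g (conjE p) := by
  have key : ∀ {f g : X → ℝ≥0∞}, AEMeasurable f μ →
      ∫⁻ x, f x * g x ∂μ ≤ (∫⁻ x, f x ∂μ) * essSup g μ := by
    intro f g hf
    rw [← lintegral_mul_const'' _ hf]
    refine lintegral_mono_ae ?_
    filter_upwards [ENNReal.ae_le_essSup g] with x hx
    gcongr
  rcases hp.eq_or_lt with rfl | hp
  · simpa [LpNormE, conjE_one] using key hf
  by_cases hp' : p = ∞
  · subst hp'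
    simp_rw [mul_comm (f _)]
    rw [mul_comm]
    simpa [LpNormE, conjE] using key hg
  · have h1 := toReal_gt_one hp hp'
    have hc : conjR p = p.toReal / (p.toReal - 1) := by simp [conjR, hp']
    have h2 := ENNReal.lintegral_mul_le_Lp_mul_Lq μ
      (Real.HolderConjugate.conjExponent h1) hf hg
    simp only [LpNormE, hp', conjE_ne_top hp, conjE_toReal hp, hc, if_false]
    exact h2

/-- For `k^{1/p'}` times `g`, the `L^{p'}` norm is an integral against `k`, up to the
essential supremum that replaces it when `p = 1`. -/
theorem LpNormE_conj_split {p : ℝ≥0∞} (hp : 1 ≤ p) (g k : X → ℝ≥0∞) :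
    LpNormE μ (fun y => g y * k y ^ tp p) (conjE p) =
      (if p = 1 then essSup g μ else 1) * (∫⁻ y, g y ^ conjR p * k y ∂μ) ^ tp p := by
  rcases hp.eq_or_lt with rfl | hp
  · simp [LpNormE, conjE_one, tp_one]
  · have h := one_le_conjR hp
    simp only [LpNormE, conjE_ne_top hp, if_false, hp.ne', one_mul, conjE_toReal hp]
    simp_rw [ENNReal.mul_rpow_of_nonneg _ _ (by linarith : 0 ≤ conjR p), ← ENNReal.rpow_mul,
      tp_eq hp, inv_mul_cancel₀ (by linarith : conjR p ≠ 0), ENNReal.rpow_one, one_div]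

end LpNormE

/-- Hölder's inequality with the weight `v` inserted as `v · v⁻¹`. -/
theorem weighted_holder {n : ℕ} {p : ℝ≥0∞} (hp : 1 ≤ p) {f : Rn n → ℝ} (hf : Measurable f)
    {v : Rn n → ℝ≥0∞} (hv : IsWeight n v) (s : Set (Rn n)) {k : Rn n → ℝ≥0∞}
    (hk : Measurable k) :
    ∫⁻ y in s, ENNReal.ofReal |f y| * k y ≤
      wLpNorm n f v p * LpNormE (volume.restrict s) (fun y => (v y)⁻¹ * k y) (conjE p) := by
  have h1 : Measurable fun y => ENNReal.ofReal |f y| * v y :=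
    hf.abs.ennreal_ofReal.mul hv.1
  have h2 : Measurable fun y => (v y)⁻¹ * k y := hv.1.inv.mul hk
  calc ∫⁻ y in s, ENNReal.ofReal |f y| * k y
      = ∫⁻ y in s, (ENNReal.ofReal |f y| * v y) * ((v y)⁻¹ * k y) := by
        refine lintegral_congr_ae (ae_restrict_of_ae ?_)
        filter_upwards [hv.2.1] with y hy
        rw [mul_assoc, ← mul_assoc (v y), ENNReal.mul_inv_cancel hy.1.ne' hy.2.ne, one_mul]
    _ ≤ _ := holder_LpNormE hp h1.aemeasurable h2.aemeasurable
    _ ≤ _ := by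
        gcongr
        exact LpNormE_mono_measure _ _ Measure.restrict_le_self

/-! ### The local factors -/

theorem vol_ball (n : ℕ) (hn : 1 ≤ n) :
    ∃ V : ℝ≥0∞, V ≠ 0 ∧ V ≠ ∞ ∧ ∀ (c : Rn n) (R : ℝ), 0 < R →
      volume (ball c R) = V * ENNReal.ofReal R ^ (n : ℝ) := by
  have : Nonempty (Fin n) := ⟨⟨0, hn⟩⟩
  refine ⟨volume (ball (0 : Rn n) 1), (measure_ball_pos _ _ one_pos).ne', measure_ball_lt_top.ne,
    fun c R hR => ?_⟩
  rw [Measure.addHaar_ball_of_pos _ _ hR, finrank_Rn, mul_comm, ENNReal.rpow_natCast,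
    ENNReal.ofReal_pow hR.le]

theorem rpow_neg_anti {a b : ℝ≥0∞} (h : a ≤ b) {e : ℝ} (he : 0 ≤ e) : b ^ (-e) ≤ a ^ (-e) := by
  rw [ENNReal.rpow_neg, ENNReal.rpow_neg]
  exact ENNReal.inv_le_inv.2 (ENNReal.rpow_le_rpow h he)

/-- Hölder's inequality for `u` with respect to the density `k`. -/
theorem jensen_kernel {X : Type*} [MeasurableSpace X] (μ : Measure X) {s : ℝ} (hs : 1 ≤ s)
    {u k : X → ℝ≥0∞} (hu : Measurable u) (hk : Measurable k) :
    (∫⁻ y, u y * k y ∂μ) ^ s ≤ (∫⁻ y, u y ^ s * k y ∂μ) * (∫⁻ y, k y ∂μ) ^ (s - 1) := by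
  have hs0 : 0 < s := by linarith
  have hq : 0 ≤ 1 - s⁻¹ := by
    have := inv_le_one_of_one_le₀ hs
    linarith
  have h := ENNReal.lintegral_mul_norm_pow_le (μ := μ) (f := fun y => u y ^ s * k y) (g := k)
    ((hu.pow_const s).mul hk).aemeasurable hk.aemeasurable (p := s⁻¹) (q := 1 - s⁻¹)
    (by positivity) hq (by ring)
  have e : ∀ y, (u y ^ s * k y) ^ s⁻¹ * k y ^ (1 - s⁻¹) = u y * k y := by
    intro y
    rw [ENNReal.mul_rpow_of_nonneg _ _ (by positivity), ENNReal.rpow_rpow_inv hs0.ne', mul_assoc,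
      ← ENNReal.rpow_add_of_nonneg _ _ (by positivity) hq]
    simp
  simp_rw [e] at h
  refine (ENNReal.rpow_le_rpow h hs0.le).trans (le_of_eq ?_)
  rw [ENNReal.mul_rpow_of_nonneg _ _ hs0.le, ENNReal.rpow_inv_rpow hs0.ne', ← ENNReal.rpow_mul]
  congr 2
  field_simp

/-- Schur test: an integral operator whose kernel has both marginals at most `A` is bounded
on `L^s` with norm at most `A`. -/
theorem kernel_Ls {X : Type*} [MeasurableSpace X] (μ : Measure X) [SFinite μ] {s : ℝ} (hs : 1 ≤ s)
    {B D : Set X} (hB : MeasurableSet B) (hD : MeasurableSet D) {u : X → ℝ≥0∞}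
    {k : X → X → ℝ≥0∞} (hu : Measurable u) (hk : Measurable fun q : X × X => k q.1 q.2)
    {A : ℝ≥0∞} (hA : A ≠ ∞) (h1 : ∀ x ∈ B, ∫⁻ y in D, k x y ∂μ ≤ A)
    (h2 : ∀ y ∈ D, ∫⁻ x in B, k x y ∂μ ≤ A) :
    ∫⁻ x in B, (∫⁻ y in D, u y * k x y ∂μ) ^ s ∂μ ≤ A ^ s * ∫⁻ y in D, u y ^ s ∂μ := by
  have hs1 : 0 ≤ s - 1 := by linarith
  have hA1 : A ^ (s - 1) ≠ ∞ := ENNReal.rpow_ne_top_of_nonneg hs1 hA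
  calc ∫⁻ x in B, (∫⁻ y in D, u y * k x y ∂μ) ^ s ∂μ
      ≤ ∫⁻ x in B, A ^ (s - 1) * ∫⁻ y in D, u y ^ s * k x y ∂μ ∂μ := by
        refine setLIntegral_mono' hB fun x hx => ?_
        refine (jensen_kernel _ hs hu (hk.comp measurable_prodMk_left)).trans ?_
        rw [mul_comm]
        exact mul_le_mul' (ENNReal.rpow_le_rpow (h1 x hx) hs1) le_rfl
    _ = A ^ (s - 1) * ∫⁻ y in D, ∫⁻ x in B, u y ^ s * k x y ∂μ ∂μ := by
        rw [lintegral_const_mul' _ _ hA1, lintegral_lintegral_swap]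
        exact (((hu.comp measurable_snd).pow_const s).mul hk).aemeasurable
    _ ≤ A ^ (s - 1) * ∫⁻ y in D, A * u y ^ s ∂μ := by
        refine mul_le_mul' le_rfl ?_
        refine setLIntegral_mono' hD fun y hy => ?_
        have hky : Measurable fun x => k x y := hk.comp measurable_prodMk_right
        rw [lintegral_const_mul _ hky, mul_comm]
        exact mul_le_mul' (h2 y hy) le_rfl
    _ = A ^ s * ∫⁻ y in D, u y ^ s ∂μ := by
        rw [lintegral_const_mul' _ _ hA, ← mul_assoc]
        congr 1
        nth_rw 2 [← ENNReal.rpow_one A]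
        rw [← ENNReal.rpow_add_of_nonneg _ _ hs1 zero_le_one]
        congr 1; ring

/-- The reverse Hölder condition turns the `L^s(B)` norm of a Riesz potential of `u` into the
`L¹` norm of `u` on a larger ball. -/
theorem riesz_RH (n : ℕ) (hn : 1 ≤ n) {s lam : ℝ} (hs : 1 ≤ s) (hlam : lam < n)
    {u : Rn n → ℝ≥0∞} (hu : Measurable u) (hRH : MemRH n s u) :
    ∃ C : ℝ≥0∞, C ≠ ∞ ∧ ∀ (c : Rn n) (R : ℝ), 0 < R →
      (∫⁻ x in ball c R, (∫⁻ y in ball c (5 * R), u y * edist x y ^ (-lam)) ^ s) ^ s⁻¹ ≤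
        C * ENNReal.ofReal R ^ (((n : ℝ) - lam) + n * (s⁻¹ - 1)) *
          ∫⁻ y in ball c (5 * R), u y := by
  obtain ⟨V, hV0, hV, hvol⟩ := vol_ball n hn
  obtain ⟨Ck, hCk, hk⟩ := riesz_ball n hn hlam
  obtain ⟨Cr, hCr, hr⟩ := hRH
  have hs0 : 0 < s := by linarith
  refine ⟨Ck * 6 ^ ((n : ℝ) - lam) * (V ^ (s⁻¹ - 1) * 5 ^ (n * (s⁻¹ - 1))) * Cr, ?_, ?_⟩
  · refine ENNReal.mul_ne_top (ENNReal.mul_ne_top (ENNReal.mul_ne_top hCk ?_)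
      (ENNReal.mul_ne_top ?_ ?_)) hCr
    · exact ENNReal.rpow_ne_top_of_ne_zero (by simp) (by simp)
    · exact ENNReal.rpow_ne_top_of_ne_zero hV0 hV
    · exact ENNReal.rpow_ne_top_of_ne_zero (by simp) (by simp)
  intro c R hR
  set r := ENNReal.ofReal R with hrdef
  have hr0 : r ≠ 0 := by simpa [hrdef] using hR
  have hrt : r ≠ ∞ := by simp [hrdef]
  set B := ball c R
  set D := ball c (5 * R)
  have h6 : ENNReal.ofReal (6 * R) = 6 * r := by
    rw [ENNReal.ofReal_mul (by norm_num), ← hrdef]; norm_num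
  have h5 : ENNReal.ofReal (5 * R) = 5 * r := by
    rw [ENNReal.ofReal_mul (by norm_num), ← hrdef]; norm_num
  set A := Ck * (6 * r) ^ ((n : ℝ) - lam) with hA
  have hAt : A ≠ ∞ := ENNReal.mul_ne_top hCk
    (ENNReal.rpow_ne_top_of_nonneg (by linarith) (ENNReal.mul_ne_top (by simp) hrt))
  have hb : ∀ x : Rn n, ∫⁻ y in ball x (6 * R), edist x y ^ (-lam) ≤ A := by
    intro x
    have := hk x (6 * R) (by linarith)
    rwa [h6] at this
  have hconv := kernel_Ls volume hs (B := B) (D := D) measurableSet_ball measurableSet_ball hu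
    (k := fun x y => edist x y ^ (-lam)) (measurable_edist.pow_const _) hAt
    (fun x hx => (lintegral_mono_set (by
      refine ball_subset_ball' ?_
      have := mem_ball'.1 hx
      linarith)).trans (hb x))
    (fun y hy => by
      simp_rw [edist_comm _ y]
      refine (lintegral_mono_set (ball_subset_ball' ?_)).trans (hb y)
      have := mem_ball'.1 hy
      linarith)
  have hvD : volume D = V * (5 * r) ^ (n : ℝ) := by
    rw [← h5]; exact hvol c (5 * R) (by linarith)
  have hvD0 : volume D ≠ 0 := (measure_ball_pos _ _ (by linarith)).ne'
  have hvDt : volume D ≠ ∞ := measure_ball_lt_top.ne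
  have hRH' := hr c (5 * R) (by linarith)
  have h7 : (∫⁻ x in D, u x ^ s) ^ s⁻¹
      ≤ Cr * (volume D ^ (s⁻¹ - 1) * ∫⁻ x in D, u x) := by
    calc (∫⁻ x in D, u x ^ s) ^ s⁻¹
        = volume D ^ s⁻¹ * ((volume D)⁻¹ * ∫⁻ x in D, u x ^ s) ^ s⁻¹ := by
          rw [← ENNReal.mul_rpow_of_nonneg _ _ (by positivity), ← mul_assoc,
            ENNReal.mul_inv_cancel hvD0 hvDt, one_mul]
      _ ≤ volume D ^ s⁻¹ * (Cr * ((volume D)⁻¹ * ∫⁻ x in D, u x)) := by gcongr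
      _ = _ := by
          rw [ENNReal.rpow_sub _ _ hvD0 hvDt, ENNReal.rpow_one, div_eq_mul_inv]
          ring
  calc _ ≤ (A ^ s * ∫⁻ y in D, u y ^ s) ^ s⁻¹ := ENNReal.rpow_le_rpow hconv (by positivity)
    _ = A * (∫⁻ y in D, u y ^ s) ^ s⁻¹ := by
        rw [ENNReal.mul_rpow_of_nonneg _ _ (by positivity), ENNReal.rpow_rpow_inv hs0.ne']
    _ ≤ A * (Cr * (volume D ^ (s⁻¹ - 1) * ∫⁻ x in D, u x)) := by gcongr
    _ = _ := by
        rw [hvD, hA, ENNReal.rpow_add _ _ hr0 hrt,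
          ENNReal.mul_rpow_of_ne_top (by simp) hrt,
          ENNReal.mul_rpow_of_ne_top hV (ENNReal.rpow_ne_top_of_nonneg (by positivity)
            (ENNReal.mul_ne_top (by simp) hrt)),
          ← ENNReal.rpow_mul, ENNReal.mul_rpow_of_ne_top (by simp) hrt]
        ring

/-- One factor of the local estimate: the mixed norm produced by Hölder's inequality on the ball is
controlled by the corresponding factor of the weight condition. -/
theorem local_factor (n : ℕ) (hn : 1 ≤ n) {s lam e : ℝ} (hs : 1 ≤ s) (hlam : lam < n)
    (he : 0 ≤ e) {p : ℝ≥0∞} (hp : 1 ≤ p) {v : Rn n → ℝ≥0∞} (hv : IsWeight n v)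
    (hRH : 1 < p → MemRH n s fun x => (v x)⁻¹ ^ conjR p) :
    ∃ C : ℝ≥0∞, C ≠ ∞ ∧ ∀ (c : Rn n) (R : ℝ), 0 < R →
      (if p = 1 then essSup (fun y => (v y)⁻¹) (volume.restrict (ball c (5 * R))) else 1) *
        (∫⁻ x in ball c R,
          (∫⁻ y in ball c (5 * R), (v y)⁻¹ ^ conjR p * edist x y ^ (-lam)) ^ s) ^ (tp p / s) ≤
      C * ENNReal.ofReal R ^ ((((n : ℝ) - lam) + n * (s⁻¹ - 1)) * tp p + e) *
        LpNormE volume (fun y => (v y)⁻¹ *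
          (volume (ball c R) ^ (n : ℝ)⁻¹ + edist c y) ^ (-e)) (conjE p) := by
  obtain ⟨V, hV0, hV, hvol⟩ := vol_ball n hn
  have hn0 : (n : ℝ) ≠ 0 := by positivity
  have ht := tp_nonneg hp
  -- the reverse Hölder step, trivial for `p = 1` since then `tp p = 0`
  have hstep : ∃ C1 : ℝ≥0∞, C1 ≠ ∞ ∧ ∀ (c : Rn n) (R : ℝ), 0 < R →
      (∫⁻ x in ball c R,
          (∫⁻ y in ball c (5 * R), (v y)⁻¹ ^ conjR p * edist x y ^ (-lam)) ^ s) ^ (tp p / s) ≤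
        C1 * ENNReal.ofReal R ^ ((((n : ℝ) - lam) + n * (s⁻¹ - 1)) * tp p) *
          (∫⁻ y in ball c (5 * R), (v y)⁻¹ ^ conjR p * 1) ^ tp p := by
    rcases hp.eq_or_lt with rfl | hp1
    · exact ⟨1, by simp, fun c R hR => by simp [tp_one]⟩
    · obtain ⟨C0, hC0, h0⟩ := riesz_RH n hn hs hlam (hv.1.inv.pow_const _) (hRH hp1)
      refine ⟨C0 ^ tp p, ENNReal.rpow_ne_top_of_nonneg ht hC0, fun c R hR => ?_⟩
      have h1 := ENNReal.rpow_le_rpow (h0 c R hR) ht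
      rw [← ENNReal.rpow_mul, inv_mul_eq_div, ENNReal.mul_rpow_of_nonneg _ _ ht,
        ENNReal.mul_rpow_of_nonneg _ _ ht, ← ENNReal.rpow_mul] at h1
      simpa using h1
  obtain ⟨C1, hC1, h1⟩ := hstep
  set κ := V ^ (n : ℝ)⁻¹
  have hκ : κ ≠ ∞ := ENNReal.rpow_ne_top_of_nonneg (by positivity) hV
  refine ⟨C1 * (κ + 5) ^ e, ENNReal.mul_ne_top hC1 (ENNReal.rpow_ne_top_of_nonneg he
    (ENNReal.add_ne_top.2 ⟨hκ, by simp⟩)), fun c R hR => ?_⟩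
  set r := ENNReal.ofReal R with hrdef
  have hr0 : r ≠ 0 := by simpa [hrdef] using hR
  have hrt : r ≠ ∞ := by simp [hrdef]
  have hL : volume (ball c R) ^ (n : ℝ)⁻¹ = κ * r := by
    rw [hvol c R hR, ENNReal.mul_rpow_of_nonneg _ _ (by positivity), ENNReal.rpow_rpow_inv hn0]
  have hρ0 : (κ + 5) * r ≠ 0 := mul_ne_zero (by simp) hr0
  have hρt : (κ + 5) * r ≠ ∞ := ENNReal.mul_ne_top (ENNReal.add_ne_top.2 ⟨hκ, by simp⟩) hrt
  have h2 : (if p = 1 then essSup (fun y => (v y)⁻¹) (volume.restrict (ball c (5 * R))) else 1) *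
      (∫⁻ y in ball c (5 * R), (v y)⁻¹ ^ conjR p * 1) ^ tp p ≤
      ((κ + 5) * r) ^ e * LpNormE volume (fun y => (v y)⁻¹ *
          (volume (ball c R) ^ (n : ℝ)⁻¹ + edist c y) ^ (-e)) (conjE p) := by
    rw [← LpNormE_conj_split hp (fun y => (v y)⁻¹) (fun _ => 1)]
    rw [← LpNormE_const_mul (ENNReal.rpow_ne_top_of_nonneg he hρt) _ (conjE_ne_zero hp)]
    refine le_trans ?_ (LpNormE_mono_measure _ _ (Measure.restrict_le_self (s := ball c (5 * R))))
    refine LpNormE_mono_ae _ ?_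
    filter_upwards [ae_restrict_mem measurableSet_ball] with y hy
    have h3 : volume (ball c R) ^ (n : ℝ)⁻¹ + edist c y ≤ (κ + 5) * r := by
      rw [hL, add_mul]
      gcongr
      rw [edist_dist, hrdef]
      have h5 : (5 : ℝ≥0∞) = ENNReal.ofReal 5 := by simp
      rw [h5, ← ENNReal.ofReal_mul (by norm_num)]
      exact ENNReal.ofReal_le_ofReal (mem_ball'.1 hy).le
    have h4 := rpow_neg_anti h3 he
    calc (v y)⁻¹ * 1 ^ tp p = (((κ + 5) * r) ^ e * ((κ + 5) * r) ^ (-e)) * (v y)⁻¹ := by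
          rw [← ENNReal.rpow_add _ _ hρ0 hρt]; simp
      _ ≤ (((κ + 5) * r) ^ e * (volume (ball c R) ^ (n : ℝ)⁻¹ + edist c y) ^ (-e)) * (v y)⁻¹ := by
          gcongr
      _ = _ := by ring
  calc _ ≤ (if p = 1 then essSup (fun y => (v y)⁻¹) (volume.restrict (ball c (5 * R))) else 1) *
        (C1 * r ^ ((((n : ℝ) - lam) + n * (s⁻¹ - 1)) * tp p) *
          (∫⁻ y in ball c (5 * R), (v y)⁻¹ ^ conjR p * 1) ^ tp p) := by
        gcongr
        exact h1 c R hR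
    _ = C1 * r ^ ((((n : ℝ) - lam) + n * (s⁻¹ - 1)) * tp p) *
        ((if p = 1 then essSup (fun y => (v y)⁻¹) (volume.restrict (ball c (5 * R))) else 1) *
          (∫⁻ y in ball c (5 * R), (v y)⁻¹ ^ conjR p * 1) ^ tp p) := by ring
    _ ≤ C1 * r ^ ((((n : ℝ) - lam) + n * (s⁻¹ - 1)) * tp p) * _ := by
        exact mul_le_mul' le_rfl h2
    _ = _ := by
        rw [ENNReal.rpow_add _ _ hr0 hrt, ENNReal.mul_rpow_of_nonneg _ _ he]
        ring

/-! ### Multilinear local and nonlocal integral estimates -/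

theorem rpow_sum_prod {ι : Type*} (s : Finset ι) {a : ℝ≥0∞} (h0 : a ≠ 0) (ht : a ≠ ∞)
    (e : ι → ℝ) : a ^ (∑ i ∈ s, e i) = ∏ i ∈ s, a ^ e i := by
  induction s using Finset.induction with
  | empty => simp
  | insert i s hi ih => rw [Finset.sum_insert hi, Finset.prod_insert hi,
      ENNReal.rpow_add _ _ h0 ht, ih]

/-- Integral over `B × (5B)^m` of a tensor product against the tensorised Riesz kernels
`∏ |x - y_i|^{-lam t_i}` with `t_i = 1 - 1/p_i`: Hölder's inequality in each `y_i`, then the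
generalised Hölder inequality in `x` with exponents `m / t_i`. -/
theorem local_int (n m : ℕ) (hn : 1 ≤ n) (hm : 1 ≤ m) {lam : ℝ} (hlam : lam < n)
    {p : Fin m → ℝ≥0∞} (hp : ∀ i, 1 ≤ p i) {v : Fin m → Rn n → ℝ≥0∞} (hv : ∀ i, IsWeight n (v i))
    (hRH : ∀ i, 1 < p i → MemRH n (m : ℝ) fun x => (v i x)⁻¹ ^ conjR (p i))
    {e : Fin m → ℝ} (he : ∀ i, 0 ≤ e i) :
    ∃ C : ℝ≥0∞, C ≠ ∞ ∧ ∀ (c : Rn n) (R : ℝ), 0 < R → ∀ f : Fin m → Rn n → ℝ,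
      (∀ i, Measurable (f i)) →
      ∫⁻ x in ball c R, ∫⁻ y in univ.pi fun _ : Fin m => ball c (5 * R),
          ∏ i, (ENNReal.ofReal |f i (y i)| * (edist x (y i) ^ (-lam)) ^ tp (p i)) ∂pim n m ≤
        C * ENNReal.ofReal R ^ ((n : ℝ) - lam * ∑ i, tp (p i) + ∑ i, e i) *
          (∏ i, LpNormE volume (fun y => (v i y)⁻¹ *
            (volume (ball c R) ^ (n : ℝ)⁻¹ + edist c y) ^ (-(e i))) (conjE (p i))) *
          ∏ i, wLpNorm n (f i) (v i) (p i) := by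
  have hm0 : (0 : ℝ) < m := by exact_mod_cast hm
  have hm1 : (1 : ℝ) ≤ m := by exact_mod_cast hm
  obtain ⟨V, hV0, hV, hvol⟩ := vol_ball n hn
  choose Ci hCi hloc using fun i => local_factor n hn hm1 hlam (he i) (hp i) (hv i) (hRH i)
  have hsum : ∑ i, tp (p i) ≤ m := by
    calc ∑ i, tp (p i) ≤ ∑ _i : Fin m, (1 : ℝ) := Finset.sum_le_sum fun i _ => tp_le_one _
      _ = m := by simp
  have hq : 0 ≤ 1 - (∑ i, tp (p i)) / m := by
    rw [sub_nonneg, div_le_one hm0]; exact hsum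
  refine ⟨V ^ (1 - (∑ i, tp (p i)) / m) * ∏ i, Ci i, ENNReal.mul_ne_top
    (ENNReal.rpow_ne_top_of_nonneg hq hV) (ENNReal.prod_ne_top fun i _ => hCi i), ?_⟩
  intro c R hR f hf
  set r := ENNReal.ofReal R with hrdef
  have hr0 : r ≠ 0 := by simpa [hrdef] using hR
  have hrt : r ≠ ∞ := by simp [hrdef]
  set B := ball c R
  set D := ball c (5 * R)
  set M : Fin m → ℝ≥0∞ := fun i =>
    if p i = 1 then essSup (fun y => (v i y)⁻¹) (volume.restrict D) else 1
  set G : Fin m → Rn n → ℝ≥0∞ := fun i x =>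
    ∫⁻ y in D, (v i y)⁻¹ ^ conjR (p i) * edist x y ^ (-lam)
  set N : Fin m → ℝ≥0∞ := fun i => wLpNorm n (f i) (v i) (p i)
  have hG : ∀ i, Measurable (G i) := by
    intro i
    have hm2 : Measurable fun q : Rn n × Rn n =>
        (v i q.2)⁻¹ ^ conjR (p i) * edist q.1 q.2 ^ (-lam) :=
      ((((hv i).1.comp measurable_snd).inv).pow_const _).mul (measurable_edist.pow_const _)
    exact hm2.lintegral_prod_right'
  have hinner : ∀ x, ∫⁻ y in univ.pi fun _ : Fin m => D,
      ∏ i, (ENNReal.ofReal |f i (y i)| * (edist x (y i) ^ (-lam)) ^ tp (p i)) ∂pim n m ≤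
      ∏ i, (N i * (M i * G i x ^ tp (p i))) := by
    intro x
    have hk : Measurable fun y : Rn n => edist x y ^ (-lam) :=
      (measurable_edist_right (x := x)).pow_const _
    rw [pim, Measure.restrict_pi_pi, lintegral_pi_prod (fun _ => volume.restrict D)
      (fun i z => ENNReal.ofReal |f i z| * (edist x z ^ (-lam)) ^ tp (p i))
      (fun i => (hf i).abs.ennreal_ofReal.mul (hk.pow_const _))]
    refine Finset.prod_le_prod' fun i _ => ?_
    refine (weighted_holder (hp i) (hf i) (hv i) D (hk.pow_const _)).trans (le_of_eq ?_)
    rw [LpNormE_conj_split (hp i)]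
  have hNM : ∀ x, ∏ i, (N i * (M i * G i x ^ tp (p i))) =
      ((∏ i, N i) * ∏ i, M i) * ((1 : ℝ≥0∞) ^ (1 - (∑ i, tp (p i)) / m) *
        ∏ i, (G i x ^ (m : ℝ)) ^ (tp (p i) / m)) := by
    intro x
    rw [Finset.prod_mul_distrib, Finset.prod_mul_distrib, ENNReal.one_rpow, one_mul, mul_assoc]
    congr 2
    refine Finset.prod_congr rfl fun i _ => ?_
    rw [← ENNReal.rpow_mul]
    congr 1
    field_simp
  calc _ ≤ ∫⁻ x in B, ((∏ i, N i) * ∏ i, M i) * ((1 : ℝ≥0∞) ^ (1 - (∑ i, tp (p i)) / m) *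
        ∏ i, (G i x ^ (m : ℝ)) ^ (tp (p i) / m)) :=
        lintegral_mono fun x => (hinner x).trans (le_of_eq (hNM x))
    _ = ((∏ i, N i) * ∏ i, M i) * ∫⁻ x in B, ((1 : ℝ≥0∞) ^ (1 - (∑ i, tp (p i)) / m) *
        ∏ i, (G i x ^ (m : ℝ)) ^ (tp (p i) / m)) := by
        refine lintegral_const_mul _ (measurable_const.mul ?_)
        exact Finset.measurable_fun_prod _ fun i _ => ((hG i).pow_const _).pow_const _
    _ ≤ ((∏ i, N i) * ∏ i, M i) * ((∫⁻ _ in B, (1 : ℝ≥0∞)) ^ (1 - (∑ i, tp (p i)) / m) *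
        ∏ i, (∫⁻ x in B, G i x ^ (m : ℝ)) ^ (tp (p i) / m)) := by
        refine mul_le_mul' le_rfl ?_
        refine ENNReal.lintegral_mul_prod_norm_pow_le Finset.univ aemeasurable_const
          (fun i _ => ((hG i).pow_const _).aemeasurable) _ ?_ hq
          (fun i _ => div_nonneg (tp_nonneg (hp i)) hm0.le)
        rw [← Finset.sum_div]; ring
    _ = (∏ i, N i) * (V * r ^ (n : ℝ)) ^ (1 - (∑ i, tp (p i)) / m) *
        ∏ i, (M i * (∫⁻ x in B, G i x ^ (m : ℝ)) ^ (tp (p i) / m)) := by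
        rw [Finset.prod_mul_distrib, setLIntegral_one, hvol c R hR]
        ring
    _ ≤ (∏ i, N i) * (V * r ^ (n : ℝ)) ^ (1 - (∑ i, tp (p i)) / m) *
        ∏ i, (Ci i * r ^ ((((n : ℝ) - lam) + n * ((m : ℝ)⁻¹ - 1)) * tp (p i) + e i) *
          LpNormE volume (fun y => (v i y)⁻¹ *
            (volume (ball c R) ^ (n : ℝ)⁻¹ + edist c y) ^ (-(e i))) (conjE (p i))) := by
        refine mul_le_mul' le_rfl (Finset.prod_le_prod' fun i _ => hloc i c R hR)
    _ = _ := by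
        rw [Finset.prod_mul_distrib, Finset.prod_mul_distrib, ← rpow_sum_prod _ hr0 hrt,
          ENNReal.mul_rpow_of_nonneg _ _ hq, ← ENNReal.rpow_mul]
        have hexp : (n : ℝ) - lam * ∑ i, tp (p i) + ∑ i, e i =
            n * (1 - (∑ i, tp (p i)) / m) +
              ∑ i, ((((n : ℝ) - lam) + n * ((m : ℝ)⁻¹ - 1)) * tp (p i) + e i) := by
          rw [Finset.sum_add_distrib, ← Finset.mul_sum]
          field_simp
          ring
        rw [hexp, ENNReal.rpow_add _ _ hr0 hrt]
        ring

/-- Integral over all of `(ℝⁿ)^m` of a tensor product against `∏ (|B|^{1/n} + |c - y_i|)^{-e_i}`. -/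
theorem global_int (n m : ℕ) {p : Fin m → ℝ≥0∞} (hp : ∀ i, 1 ≤ p i)
    {v : Fin m → Rn n → ℝ≥0∞} (hv : ∀ i, IsWeight n (v i)) (e : Fin m → ℝ) (c : Rn n) (L : ℝ≥0∞)
    {f : Fin m → Rn n → ℝ} (hf : ∀ i, Measurable (f i)) :
    ∫⁻ y, ∏ i, (ENNReal.ofReal |f i (y i)| * (L + edist c (y i)) ^ (-(e i))) ∂pim n m ≤
      (∏ i, LpNormE volume (fun y => (v i y)⁻¹ * (L + edist c y) ^ (-(e i))) (conjE (p i))) *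
        ∏ i, wLpNorm n (f i) (v i) (p i) := by
  have hk : ∀ i, Measurable fun y : Rn n => (L + edist c y) ^ (-(e i)) := fun i =>
    (measurable_const.add (measurable_edist_right (x := c))).pow_const _
  rw [pim, lintegral_pi_prod (fun _ => volume)
    (fun i z => ENNReal.ofReal |f i z| * (L + edist c z) ^ (-(e i)))
    (fun i => (hf i).abs.ennreal_ofReal.mul (hk i)), ← Finset.prod_mul_distrib]
  refine Finset.prod_le_prod' fun i _ => ?_
  have := weighted_holder (hp i) (hf i) (hv i) univ (hk i)
  rw [Measure.restrict_univ] at this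
  rwa [mul_comm (LpNormE _ _ _)]

/-! ### Pointwise kernel estimates -/

theorem sum_edist_eq {n m : ℕ} (x : Rn n) (y : Fin m → Rn n) :
    ENNReal.ofReal (∑ i, dist x (y i)) = ∑ i, edist x (y i) := by
  rw [ENNReal.ofReal_sum_of_nonneg fun i _ => dist_nonneg]
  simp [edist_dist]

/-- Size of the commutator kernel: it has the homogeneity `α + δ - mn`, distributed over the
variables with weights `lam * t i`. -/
theorem size_bound {n m : ℕ} {α δ lam : ℝ} (hδ : 0 < δ) {K : Rn n → (Fin m → Rn n) → ℝ}
    (hK : SizeCond n m α K) {b : Rn n → ℝ} (hb : MemLip n δ b) (j : Fin m) (hlam : 0 ≤ lam)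
    {t : Fin m → ℝ} (ht : ∀ i, 0 ≤ t i) (hsum : lam * ∑ i, t i = (m : ℝ) * n - (α + δ)) :
    ∃ C : ℝ≥0∞, C ≠ ∞ ∧ ∀ x y, ENNReal.ofReal |(b x - b (y j)) * K x y| ≤
      C * ∏ i, (edist x (y i) ^ (-lam)) ^ t i := by
  obtain ⟨CK, hCK, hK⟩ := hK
  obtain ⟨Cb, hCb, hb⟩ := hb
  refine ⟨ENNReal.ofReal (Cb * CK), by simp, fun x y => ?_⟩
  set S := ∑ i, dist x (y i) with hS
  have hle : ∀ i, dist x (y i) ≤ S := fun i =>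
    Finset.single_le_sum (f := fun i => dist x (y i)) (fun i _ => dist_nonneg) (Finset.mem_univ i)
  have hS0 : 0 ≤ S := dist_nonneg.trans (hle j)
  rcases hS0.eq_or_lt with h0 | hpos
  · -- on the diagonal the factor `b x - b (y j)` vanishes
    have : dist x (y j) = 0 := le_antisymm (h0 ▸ hle j) dist_nonneg
    rw [← dist_eq_zero.1 this]
    simp
  have h1 : |(b x - b (y j)) * K x y| ≤ Cb * CK * S ^ (-(lam * ∑ i, t i)) := by
    rw [abs_mul]
    calc |b x - b (y j)| * |K x y| ≤ (Cb * S ^ δ) * (CK * S ^ (α - (m : ℝ) * n)) := by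
          refine mul_le_mul ((hb x (y j)).trans ?_) (hK x y hpos.ne') (abs_nonneg _) (by positivity)
          gcongr
          exact hle j
      _ = Cb * CK * (S ^ δ * S ^ (α - (m : ℝ) * n)) := by ring
      _ = _ := by
          rw [← Real.rpow_add hpos, hsum]
          congr 2; ring
  refine (ENNReal.ofReal_le_ofReal h1).trans ?_
  rw [ENNReal.ofReal_mul (by positivity)]
  refine mul_le_mul' le_rfl ?_
  rw [← ENNReal.ofReal_rpow_of_pos hpos, Finset.mul_sum, ← Finset.sum_neg_distrib,
    rpow_sum_prod _ (by simpa using hpos) (by simp)]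
  refine Finset.prod_le_prod' fun i _ => ?_
  rw [← ENNReal.rpow_mul, neg_mul]
  refine rpow_neg_anti ?_ (mul_nonneg hlam (ht i))
  rw [edist_dist]
  exact ENNReal.ofReal_le_ofReal (hle i)

/-- Regularity of the commutator kernel away from the ball, when at least one variable `y i` lies
outside `5B`. -/
theorem smooth_bound {n m : ℕ} {α γ δ : ℝ} (hδ : 0 < δ) (hδγ : δ < γ)
    {K : Rn n → (Fin m → Rn n) → ℝ} (hK : SizeCond n m α K) (hKs : SmoothCond n m α γ K)
    {b : Rn n → ℝ} (hb : MemLip n δ b) (j : Fin m) {e : Fin m → ℝ} (he : ∀ i, 0 ≤ e i)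
    (hsum : ∑ i, e i = (m : ℝ) * n - α) {κ : ℝ≥0∞} (hκ : κ ≠ ∞) :
    ∃ C : ℝ≥0∞, C ≠ ∞ ∧ ∀ (c : Rn n) (R : ℝ), 0 < R → ∀ x ∈ ball c R, ∀ z ∈ ball c R,
      ∀ y ∈ (univ.pi fun _ : Fin m => ball c (5 * R))ᶜ,
        ENNReal.ofReal |(b x - b (y j)) * K x y - (b z - b (y j)) * K z y| ≤
          C * ENNReal.ofReal R ^ δ *
            ∏ i, (κ * ENNReal.ofReal R + edist c (y i)) ^ (-(e i)) := by
  obtain ⟨CK, hCK, hK⟩ := hK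
  obtain ⟨CS, hCS, hKs⟩ := hKs
  obtain ⟨Cb, hCb, hb⟩ := hb
  have hκ0 : κ + 2 ≠ 0 := by simp
  have hκt : κ + 2 ≠ ∞ := ENNReal.add_ne_top.2 ⟨hκ, by simp⟩
  set C0 := Cb * CK * 2 ^ δ + Cb * CS * 2 ^ δ * 2 ^ δ with hC0
  have hC0n : 0 ≤ C0 := by positivity
  refine ⟨ENNReal.ofReal C0 * ∏ i, (κ + 2) ^ e i, ENNReal.mul_ne_top (by simp)
    (ENNReal.prod_ne_top fun i _ => ENNReal.rpow_ne_top_of_nonneg (he i) hκt), ?_⟩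
  intro c R hR x hx z hz y hy
  set S := ∑ i, dist x (y i) with hS
  have hle : ∀ i, dist x (y i) ≤ S := fun i =>
    Finset.single_le_sum (f := fun i => dist x (y i)) (fun i _ => dist_nonneg) (Finset.mem_univ i)
  rw [mem_ball] at hx hz
  have hxz : dist x z < 2 * R := by
    have := dist_triangle_right x z c
    linarith
  have hSR : 4 * R < S := by
    simp only [mem_compl_iff, mem_univ_pi, not_forall, mem_ball, not_lt] at hy
    obtain ⟨i, hi⟩ := hy
    have h1 := dist_triangle (y i) x c
    have h2 := hle i
    rw [dist_comm x] at h2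
    linarith
  have hpos : 0 < S := by linarith
  set a := α - (m : ℝ) * n with ha
  have t1 : |b x - b z| * |K x y| ≤ Cb * CK * 2 ^ δ * (R ^ δ * S ^ a) := by
    calc |b x - b z| * |K x y| ≤ (Cb * (2 * R) ^ δ) * (CK * S ^ a) := by
          refine mul_le_mul ((hb x z).trans ?_) (hK x y hpos.ne') (abs_nonneg _) (by positivity)
          gcongr
      _ = _ := by
          rw [Real.mul_rpow (by norm_num) hR.le]; ring
  have t2 : |b z - b (y j)| * |K x y - K z y| ≤ Cb * CS * 2 ^ δ * 2 ^ δ * (R ^ δ * S ^ a) := by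
    have h3 : dist z (y j) ≤ 2 * S := by
      have h1 := dist_triangle z x (y j)
      have h2 := hle j
      rw [dist_comm z x] at h1
      linarith
    have h4 : dist x z ^ γ ≤ (2 * R) ^ δ * S ^ (γ - δ) := by
      calc dist x z ^ γ ≤ (2 * R) ^ γ := by gcongr; linarith
        _ = (2 * R) ^ δ * (2 * R) ^ (γ - δ) := by
            rw [← Real.rpow_add (by positivity)]; congr 1; ring
        _ ≤ _ := by
            gcongr
            linarith
    calc |b z - b (y j)| * |K x y - K z y|
        ≤ (Cb * (2 * S) ^ δ) * (CS * ((2 * R) ^ δ * S ^ (γ - δ)) * S ^ (a - γ)) := by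
          refine mul_le_mul ((hb z (y j)).trans ?_) ((hKs x z y ?_).trans ?_) (abs_nonneg _)
            (by positivity)
          · gcongr
          · linarith
          · gcongr
      _ = Cb * CS * 2 ^ δ * 2 ^ δ * (R ^ δ * (S ^ δ * S ^ (γ - δ) * S ^ (a - γ))) := by
          rw [Real.mul_rpow (by norm_num) hR.le, Real.mul_rpow (by norm_num) hpos.le]; ring
      _ = _ := by
          rw [← Real.rpow_add hpos, ← Real.rpow_add hpos]
          congr 3; ring
  have t3 : |(b x - b (y j)) * K x y - (b z - b (y j)) * K z y| ≤ C0 * (R ^ δ * S ^ a) := by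
    have : (b x - b (y j)) * K x y - (b z - b (y j)) * K z y =
        (b x - b z) * K x y + (b z - b (y j)) * (K x y - K z y) := by ring
    rw [this]
    refine (abs_add_le _ _).trans ?_
    rw [abs_mul, abs_mul, hC0, add_mul]
    exact add_le_add t1 t2
  refine (ENNReal.ofReal_le_ofReal t3).trans ?_
  rw [ENNReal.ofReal_mul hC0n, ENNReal.ofReal_mul (by positivity),
    ← ENNReal.ofReal_rpow_of_pos hR, ← ENNReal.ofReal_rpow_of_pos hpos]
  have hprod : ENNReal.ofReal S ^ a ≤ (∏ i, (κ + 2) ^ e i) *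
      ∏ i, (κ * ENNReal.ofReal R + edist c (y i)) ^ (-(e i)) := by
    have hSa : a = ∑ i, -(e i) := by
      rw [Finset.sum_neg_distrib, hsum]; ring
    have hS0 : ENNReal.ofReal S ≠ 0 := by simpa using hpos
    rw [hSa, rpow_sum_prod _ hS0 (by simp), ← Finset.prod_mul_distrib]
    refine Finset.prod_le_prod' fun i _ => ?_
    have h5 : κ * ENNReal.ofReal R + edist c (y i) ≤ (κ + 2) * ENNReal.ofReal S := by
      rw [add_mul]
      refine add_le_add ?_ ?_
      · gcongr
        linarith
      · have h2 : 2 * ENNReal.ofReal S = ENNReal.ofReal (2 * S) := by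
          rw [ENNReal.ofReal_mul (by norm_num)]; simp
        rw [edist_dist, h2]
        refine ENNReal.ofReal_le_ofReal ?_
        have h1 := dist_triangle c x (y i)
        have h3 := hle i
        rw [dist_comm c x] at h1
        linarith
    calc ENNReal.ofReal S ^ (-(e i))
        = (κ + 2) ^ e i * ((κ + 2) ^ (-(e i)) * ENNReal.ofReal S ^ (-(e i))) := by
          rw [← mul_assoc, ← ENNReal.rpow_add _ _ hκ0 hκt]; simp
      _ = (κ + 2) ^ e i * ((κ + 2) * ENNReal.ofReal S) ^ (-(e i)) := by
          rw [ENNReal.mul_rpow_of_ne_top hκt (by simp)]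
      _ ≤ _ := mul_le_mul' le_rfl (rpow_neg_anti h5 (he i))
  calc _ ≤ ENNReal.ofReal C0 * (ENNReal.ofReal R ^ δ * ((∏ i, (κ + 2) ^ e i) *
      ∏ i, (κ * ENNReal.ofReal R + edist c (y i)) ^ (-(e i)))) := by gcongr
    _ = _ := by ring

/-! ### Oscillation of the commutator -/

/-- Oscillation of the `j`-th term of the commutator over a ball, with an unspecified constant in
place of the average. -/
theorem comm_osc (n m : ℕ) (hn : 1 ≤ n) (hm : 1 ≤ m) (α γ δ : ℝ)
    (hδ : 0 < δ) (hδγ : δ < γ) (hδα : δ < (m : ℝ) * n - α)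
    (K : Rn n → (Fin m → Rn n) → ℝ)
    (hKmeas : Measurable fun q : Rn n × (Fin m → Rn n) => K q.1 q.2)
    (hKsize : SizeCond n m α K) (hKsmooth : SmoothCond n m α γ K)
    (p : Fin m → ℝ≥0∞) (hp : ∀ i, 1 ≤ p i)
    (hpn : ∑ i, (p i)⁻¹ < ENNReal.ofReal ((α + δ) / (n : ℝ)))
    (b : Rn n → ℝ) (hbmeas : Measurable b) (hb : MemLip n δ b) (j : Fin m)
    (β : Fin m → ℝ) (hβ : ∀ i, 0 < β i ∧ β i < n) (hβsum : ∑ i, β i = α + δ)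
    (v : Fin m → Rn n → ℝ≥0∞) (hv : ∀ i, IsWeight n (v i))
    (hRH : ∀ i, 1 < p i → MemRH n (m : ℝ) fun x => (v i x)⁻¹ ^ conjR (p i)) :
    ∃ C : ℝ≥0∞, C ≠ ∞ ∧ ∀ (c : Rn n) (R : ℝ), 0 < R →
      ∀ f : Fin m → Rn n → ℝ, (∀ i, Measurable (f i)) →
        ∃ a : ℝ, ∫⁻ x in ball c R, ENNReal.ofReal
            |(∫ y, (b x - b (y j)) * K x y * ∏ i, f i (y i) ∂pim n m) - a| ≤
          C * ENNReal.ofReal R ^ ((n : ℝ) + δ) * (∏ i, HmFactor n m δ β p v c R i) *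
            ∏ i, wLpNorm n (f i) (v i) (p i) := by
  have hn0 : (0 : ℝ) < n := by exact_mod_cast hn
  have hm0 : (0 : ℝ) < m := by exact_mod_cast hm
  obtain ⟨V, hV0, hV, hvol⟩ := vol_ball n hn
  have ht : ∀ i, 0 ≤ tp (p i) := fun i => tp_nonneg (hp i)
  set τ := ∑ i, tp (p i) with hτ
  -- `τ = m - 1/p`, and `p > n / (α + δ)` makes the Riesz exponent `lam` smaller than `n`
  have hτn : (m : ℝ) * n - (α + δ) < n * τ := by
    have h1 : ∑ i, ((p i)⁻¹).toReal < (α + δ) / n := by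
      have h2 : (∑ i, (p i)⁻¹).toReal = ∑ i, ((p i)⁻¹).toReal :=
        ENNReal.toReal_sum fun i _ => by
          have := hp i
          simp only [ne_eq, ENNReal.inv_eq_top]
          rintro h
          simp [h] at this
      rw [← h2]
      have h3 : 0 < (α + δ) / n := by
        by_contra h
        rw [ENNReal.ofReal_of_nonpos (not_lt.1 h)] at hpn
        exact not_lt_bot hpn
      have := (ENNReal.toReal_lt_toReal (ne_top_of_lt hpn) (by simp)).2 hpn
      rwa [ENNReal.toReal_ofReal h3.le] at this
    have h2 : τ = m - ∑ i, ((p i)⁻¹).toReal := by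
      rw [hτ]; simp [tp, Finset.sum_sub_distrib]
    rw [lt_div_iff₀ hn0] at h1
    rw [h2]
    linarith
  have hnum : 0 < (m : ℝ) * n - (α + δ) := by linarith
  have hτ0 : 0 < τ := by
    by_contra h
    have : n * τ ≤ 0 := mul_nonpos_of_nonneg_of_nonpos hn0.le (not_lt.1 h)
    linarith
  set lam := ((m : ℝ) * n - (α + δ)) / τ with hlamdef
  have hlam0 : 0 ≤ lam := by positivity
  have hlam : lam < n := by rw [hlamdef, div_lt_iff₀ hτ0]; exact hτn
  have hlamτ : lam * τ = (m : ℝ) * n - (α + δ) := by rw [hlamdef]; field_simp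
  set e : Fin m → ℝ := fun i => (n : ℝ) - β i + δ / (m : ℝ) with he_def
  have he : ∀ i, 0 ≤ e i := fun i => by
    have := (hβ i).2
    have h2 : 0 ≤ δ / (m : ℝ) := by positivity
    simp only [he_def]; linarith
  have hesum : ∑ i, e i = (m : ℝ) * n - α := by
    simp only [he_def, Finset.sum_add_distrib, Finset.sum_sub_distrib, hβsum]
    simp
    field_simp
    ring
  set κ := V ^ (n : ℝ)⁻¹ with hκdef
  have hκ : κ ≠ ∞ := ENNReal.rpow_ne_top_of_nonneg (by positivity) hV
  obtain ⟨C1, hC1, h1⟩ := size_bound hδ hKsize hb j hlam0 ht hlamτ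
  obtain ⟨C2, hC2, h2⟩ := local_int n m hn hm hlam hp hv hRH he
  obtain ⟨C3, hC3, h3⟩ := smooth_bound hδ hδγ hKsize hKsmooth hb j he hesum hκ
  refine ⟨C1 * C2 + V * C3, ENNReal.add_ne_top.2 ⟨ENNReal.mul_ne_top hC1 hC2,
    ENNReal.mul_ne_top hV hC3⟩, fun c R hR f hf => ?_⟩
  set r := ENNReal.ofReal R with hrdef
  have hr0 : r ≠ 0 := by simpa [hrdef] using hR
  have hrt : r ≠ ∞ := by simp [hrdef]
  set H := ∏ i, HmFactor n m δ β p v c R i with hH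
  set N := ∏ i, wLpNorm n (f i) (v i) (p i) with hN
  set F : Rn n → (Fin m → Rn n) → ℝ := fun x y => (b x - b (y j)) * K x y * ∏ i, f i (y i)
  set D : Set (Fin m → Rn n) := univ.pi fun _ : Fin m => ball c (5 * R)
  have hL : volume (ball c R) ^ (n : ℝ)⁻¹ = κ * r := by
    rw [hvol c R hR, ENNReal.mul_rpow_of_nonneg _ _ (by positivity),
      ENNReal.rpow_rpow_inv hn0.ne']
  have hF : Measurable fun q : Rn n × (Fin m → Rn n) => F q.1 q.2 := by
    refine Measurable.mul (Measurable.mul ?_ hKmeas) ?_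
    · exact (hbmeas.comp measurable_fst).sub
        (hbmeas.comp ((measurable_pi_apply j).comp measurable_snd))
    · exact Finset.measurable_fun_prod _ fun i _ =>
        (hf i).comp ((measurable_pi_apply i).comp measurable_snd)
  have hfprod : ∀ (s : ℝ) (y : Fin m → Rn n), ENNReal.ofReal |s * ∏ i, f i (y i)| =
      ENNReal.ofReal |s| * ∏ i, ENNReal.ofReal |f i (y i)| := by
    intro s y
    rw [abs_mul, ENNReal.ofReal_mul (abs_nonneg _), Finset.abs_prod,
      ENNReal.ofReal_prod_of_nonneg fun i _ => abs_nonneg _]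
  have hA : ∫⁻ x in ball c R, ∫⁻ y in D, ENNReal.ofReal |F x y| ∂pim n m ≤
      C1 * C2 * r ^ ((n : ℝ) + δ) * H * N := by
    calc _ ≤ ∫⁻ x in ball c R, C1 * ∫⁻ y in D,
          ∏ i, (ENNReal.ofReal |f i (y i)| * (edist x (y i) ^ (-lam)) ^ tp (p i)) ∂pim n m := by
          refine lintegral_mono fun x => ?_
          rw [← lintegral_const_mul' _ _ hC1]
          refine lintegral_mono fun y => ?_
          rw [hfprod, Finset.prod_mul_distrib]
          calc _ ≤ (C1 * ∏ i, (edist x (y i) ^ (-lam)) ^ tp (p i)) *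
                ∏ i, ENNReal.ofReal |f i (y i)| := mul_le_mul' (h1 x y) le_rfl
            _ = _ := by ring
      _ = C1 * ∫⁻ x in ball c R, ∫⁻ y in D,
          ∏ i, (ENNReal.ofReal |f i (y i)| * (edist x (y i) ^ (-lam)) ^ tp (p i)) ∂pim n m :=
          lintegral_const_mul' _ _ hC1
      _ ≤ C1 * (C2 * r ^ ((n : ℝ) - lam * τ + ∑ i, e i) * H * N) :=
          mul_le_mul' le_rfl (h2 c R hR f hf)
      _ = _ := by
          have hexp : (n : ℝ) - lam * τ + ∑ i, e i = n + δ := by rw [hlamτ, hesum]; ring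
          rw [hexp]; ring
  have hQ : ∀ x ∈ ball c R, ∀ z ∈ ball c R,
      ∫⁻ y in Dᶜ, ENNReal.ofReal |F x y - F z y| ∂pim n m ≤ C3 * r ^ δ * (H * N) := by
    intro x hx z hz
    have hC3r : C3 * r ^ δ ≠ ∞ := ENNReal.mul_ne_top hC3 (ENNReal.rpow_ne_top_of_nonneg hδ.le hrt)
    have hDm : MeasurableSet Dᶜ := (MeasurableSet.univ_pi fun _ => measurableSet_ball).compl
    calc _ ≤ ∫⁻ y in Dᶜ, C3 * r ^ δ *
          ∏ i, (ENNReal.ofReal |f i (y i)| * (κ * r + edist c (y i)) ^ (-(e i))) ∂pim n m := by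
          refine setLIntegral_mono' hDm fun y hy => ?_
          have : F x y - F z y = ((b x - b (y j)) * K x y - (b z - b (y j)) * K z y) *
              ∏ i, f i (y i) := by simp only [F]; ring
          rw [this, hfprod, Finset.prod_mul_distrib]
          calc _ ≤ (C3 * r ^ δ * ∏ i, (κ * r + edist c (y i)) ^ (-(e i))) *
                ∏ i, ENNReal.ofReal |f i (y i)| :=
                mul_le_mul' (h3 c R hR x hx z hz y hy) le_rfl
            _ = _ := by ring
      _ = C3 * r ^ δ * ∫⁻ y in Dᶜ,
          ∏ i, (ENNReal.ofReal |f i (y i)| * (κ * r + edist c (y i)) ^ (-(e i))) ∂pim n m :=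
          lintegral_const_mul' _ _ hC3r
      _ ≤ C3 * r ^ δ * (H * N) := by
          refine mul_le_mul' le_rfl ((setLIntegral_le_lintegral _ _).trans ?_)
          rw [← hL]
          exact global_int n m hp hv e c _ hf
  have : SFinite (pim n m) := by unfold pim; infer_instance
  obtain ⟨a, ha⟩ := osc_const volume (pim n m) hF measurableSet_ball
    (measure_ball_pos volume c hR).ne' (MeasurableSet.univ_pi fun _ => measurableSet_ball) hA hQ
  refine ⟨a, ha.trans (le_of_eq ?_)⟩
  rw [hvol c R hR, ENNReal.rpow_add _ _ hr0 hrt]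
  ring

/-- Theorem 1.1: boundedness of the sum-type commutator `T^m_{α,b}` from a product of
weighted Lebesgue spaces into the weighted Lipschitz space `𝕃_w(δ̃)`. -/
theorem sum_commutator_Lp_Lipschitz_bound
    (n m : ℕ) (hn : 1 ≤ n) (hm : 1 ≤ m) (α γ δ δt : ℝ)
    (hα : 0 < α) (hαmn : α < (m : ℝ) * n) (hγ : 0 < γ) (hγ1 : γ ≤ 1)
    (hδ : 0 < δ) (hδγ : δ < γ) (hδα : δ < (m : ℝ) * n - α) (hδt : δt ≤ δ)
    (K : Rn n → (Fin m → Rn n) → ℝ)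
    (hKmeas : Measurable fun q : Rn n × (Fin m → Rn n) => K q.1 q.2)
    (hKsize : SizeCond n m α K) (hKsmooth : SmoothCond n m α γ K)
    (p : Fin m → ℝ≥0∞) (hp : ∀ i, 1 ≤ p i)
    (hpn : ∑ i, (p i)⁻¹ < ENNReal.ofReal ((α + δ) / (n : ℝ)))
    (b : Fin m → Rn n → ℝ) (hbmeas : ∀ i, Measurable (b i)) (hb : ∀ i, MemLip n δ (b i))
    (β : Fin m → ℝ) (hβ : ∀ i, 0 < β i ∧ β i < n) (hβsum : ∑ i, β i = α + δ)
    (w : Rn n → ℝ≥0∞) (v : Fin m → Rn n → ℝ≥0∞)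
    (hw : IsWeight n w) (hv : ∀ i, IsWeight n (v i))
    (hH : MemHm n m δ δt β p w v)
    (hRH : ∀ i, 1 < p i → MemRH n (m : ℝ) fun x => (v i x)⁻¹ ^ conjR (p i)) :
    ∃ C : ℝ≥0∞, C ≠ ∞ ∧ ∀ (c : Rn n) (R : ℝ), 0 < R →
      ∀ f : Fin m → Rn n → ℝ, (∀ i, Measurable (f i)) →
        (∀ i, wLpNorm n (f i) (v i) (p i) ≠ ∞) →
        essSup w (volume.restrict (ball c R)) /
              volume (ball c R) ^ (1 + δt / (n : ℝ)) *
            ∫⁻ x in ball c R,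
              ENNReal.ofReal
                |TSumComm n m K b f x -
                  (volume (ball c R)).toReal⁻¹ * ∫ z in ball c R, TSumComm n m K b f z| ≤
          C * ∏ i, wLpNorm n (f i) (v i) (p i) := by
  have hn0 : (0 : ℝ) < n := by exact_mod_cast hn
  obtain ⟨V, hV0, hV, hvol⟩ := vol_ball n hn
  obtain ⟨CH, hCH, hHm⟩ := hH
  choose C hC hosc using fun j => comm_osc n m hn hm α γ δ hδ hδγ hδα K hKmeas hKsize hKsmooth p hp
    hpn (b j) (hbmeas j) (hb j) j β hβ hβsum v hv hRH
  have hV1 : V ^ (-(1 + δ / (n : ℝ))) ≠ ∞ := ENNReal.rpow_ne_top_of_ne_zero hV0 hV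
  refine ⟨2 * (∑ j, C j) * V ^ (-(1 + δ / (n : ℝ))) * CH,
    ENNReal.mul_ne_top (ENNReal.mul_ne_top (ENNReal.mul_ne_top (by simp)
      (ENNReal.sum_ne_top.2 fun j _ => hC j)) hV1) hCH, ?_⟩
  intro c R hR f hf _
  set r := ENNReal.ofReal R with hrdef
  have hr0 : r ≠ 0 := by simpa [hrdef] using hR
  have hrt : r ≠ ∞ := by simp [hrdef]
  set H := ∏ i, HmFactor n m δ β p v c R i with hHdef
  set N := ∏ i, wLpNorm n (f i) (v i) (p i)
  have : SFinite (pim n m) := by unfold pim; infer_instance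
  have hFm : ∀ j, StronglyMeasurable fun x : Rn n =>
      ∫ y, (b j x - b j (y j)) * K x y * ∏ i, f i (y i) ∂pim n m := by
    intro j
    have hF : Measurable fun q : Rn n × (Fin m → Rn n) =>
        (b j q.1 - b j (q.2 j)) * K q.1 q.2 * ∏ i, f i (q.2 i) := by
      refine Measurable.mul (Measurable.mul ?_ hKmeas) ?_
      · exact ((hbmeas j).comp measurable_fst).sub
          ((hbmeas j).comp ((measurable_pi_apply j).comp measurable_snd))
      · exact Finset.measurable_fun_prod _ fun i _ =>
          (hf i).comp ((measurable_pi_apply i).comp measurable_snd)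
    exact hF.stronglyMeasurable.integral_prod_right'
  have hTm : Measurable (TSumComm n m K b f) :=
    Finset.measurable_fun_sum _ fun j _ => (hFm j).measurable
  choose a ha using fun j => hosc j c R hR f hf
  have hconst : ∫⁻ x in ball c R, ENNReal.ofReal |TSumComm n m K b f x - ∑ j, a j| ≤
      (∑ j, C j) * r ^ ((n : ℝ) + δ) * H * N := by
    calc _ ≤ ∫⁻ x in ball c R, ∑ j, ENNReal.ofReal
          |(∫ y, (b j x - b j (y j)) * K x y * ∏ i, f i (y i) ∂pim n m) - a j| := by
          refine lintegral_mono fun x => ?_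
          rw [TSumComm, ← Finset.sum_sub_distrib,
            ← ENNReal.ofReal_sum_of_nonneg fun _ _ => abs_nonneg _]
          exact ENNReal.ofReal_le_ofReal (Finset.abs_sum_le_sum_abs _ _)
      _ = ∑ j, ∫⁻ x in ball c R, ENNReal.ofReal
          |(∫ y, (b j x - b j (y j)) * K x y * ∏ i, f i (y i) ∂pim n m) - a j| :=
          lintegral_finsetSum _ fun j _ =>
            ((hFm j).measurable.sub_const _).abs.ennreal_ofReal
      _ ≤ ∑ j, C j * r ^ ((n : ℝ) + δ) * H * N := Finset.sum_le_sum fun j _ => ha j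
      _ = _ := by simp_rw [← Finset.sum_mul]
  set vB := volume (ball c R) with hvB
  have hvB0 : vB ≠ 0 := (measure_ball_pos volume c hR).ne'
  have hvBt : vB ≠ ∞ := measure_ball_lt_top.ne
  have : IsFiniteMeasure ((volume : Measure (Rn n)).restrict (ball c R)) :=
    ⟨by rw [Measure.restrict_apply_univ]; exact measure_ball_lt_top⟩
  have havg := osc_avg (volume.restrict (ball c R)) (by rwa [Measure.restrict_apply_univ])
    hTm.aestronglyMeasurable (∑ j, a j) hconst
  rw [Measure.restrict_apply_univ] at havg
  have hr : r ^ ((n : ℝ) + δ) = V ^ (-(1 + δ / (n : ℝ))) * vB ^ (1 + δ / (n : ℝ)) := by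
    rw [hvB, hvol c R hR, ENNReal.mul_rpow_of_ne_top hV
      (ENNReal.rpow_ne_top_of_nonneg hn0.le hrt), ← ENNReal.rpow_mul, ← mul_assoc,
      ← ENNReal.rpow_add _ _ hV0 hV]
    have : (n : ℝ) * (1 + δ / n) = n + δ := by field_simp
    rw [this]
    simp
  have hpow : vB ^ (1 + δ / (n : ℝ)) / vB ^ (1 + δt / (n : ℝ)) = (vB ^ ((δt - δ) / (n : ℝ)))⁻¹ := by
    rw [← ENNReal.rpow_sub _ _ hvB0 hvBt, ← ENNReal.rpow_neg]
    congr 1; ring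
  set W := essSup w (volume.restrict (ball c R))
  calc _ ≤ W / vB ^ (1 + δt / (n : ℝ)) * (2 * ((∑ j, C j) * r ^ ((n : ℝ) + δ) * H * N)) :=
        mul_le_mul' le_rfl havg
    _ = 2 * (∑ j, C j) * V ^ (-(1 + δ / (n : ℝ))) *
          (W * (vB ^ (1 + δ / (n : ℝ)) / vB ^ (1 + δt / (n : ℝ))) * H) * N := by
        rw [hr]; simp only [div_eq_mul_inv]; ring
    _ ≤ 2 * (∑ j, C j) * V ^ (-(1 + δ / (n : ℝ))) * CH * N := by
        rw [hpow, ← div_eq_mul_inv]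
        exact mul_le_mul' (mul_le_mul' le_rfl (hHm c R hR)) le_rfl
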